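/- arXiv:1905.08229 — 14 statements merged into one kernel-verified Lean document; each statement's English description precedes it below -/
import Mathlib

section
/- Let A be a commutative ring equipped with a δ-structure (for the fixed prime p). If p^n = 0 in A for some n ≥ 0, then A is the zero ring (i.e., 1 = 0 in A). -/
/-!
The values of a δ-structure on the image of `ℕ` are forced: since `δ 1 = 0`, the addition law gives
`δ m = (m - m ^ p) / p` by induction on `m` (`IsDeltaStructure.map_natCast`). Apply this to
`m = p ^ (k + 1)`, assumed to vanish in `A`: `0 = δ 0 = p ^ k - p ^ ((k + 1) * p - 1)`. As
`(k + 1) * p - 1 ≥ k + 1`, the last term vanishes, so `p ^ k = 0`. Descending on the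
exponent gives `1 = p ^ 0 = 0`.
-/

/-- `deltaE p x y` is the evaluation at `(x, y)` of the integer polynomial
`(X^p + Y^p - (X+Y)^p)/p ∈ ℤ[X,Y]` (for `p` prime). -/
def deltaE (p : ℕ) {A : Type*} [CommRing A] (x y : A) : A :=
  - ∑ i ∈ Finset.Ioo 0 p, ((p.choose i / p : ℕ) : A) * x ^ i * y ^ (p - i)

/-- A δ-structure on a commutative ring `A` for the prime `p`. -/
structure IsDeltaStructure (p : ℕ) {A : Type*} [CommRing A] (δ : A → A) : Prop where
  map_zero : δ 0 = 0
  map_one : δ 1 = 0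
  map_mul : ∀ x y : A, δ (x * y) = x ^ p * δ y + y ^ p * δ x + (p : A) * δ x * δ y
  map_add : ∀ x y : A, δ (x + y) = δ x + δ y + deltaE p x y

/-- The defining property of `deltaE`: each inner binomial coefficient `p.choose i` is divisible by
the prime `p`, so the division in its definition is exact. -/
theorem mul_deltaE (p : ℕ) (hp : p.Prime) {A : Type*} [CommRing A] (x y : A) :
    (p : A) * deltaE p x y = x ^ p + y ^ p - (x + y) ^ p := by
  have hsum : (p : A) * ∑ i ∈ Finset.Ioo 0 p, ((p.choose i / p : ℕ) : A) * x ^ i * y ^ (p - i)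
      = ∑ i ∈ Finset.Ioo 0 p, x ^ i * y ^ (p - i) * (p.choose i : A) := by
    rw [Finset.mul_sum]
    refine Finset.sum_congr rfl fun i hi => ?_
    rw [Finset.mem_Ioo] at hi
    have hdvd : p ∣ p.choose i := hp.dvd_choose_self hi.1.ne' hi.2
    have hcast : (p.choose i : A) = (p : A) * ((p.choose i / p : ℕ) : A) := by
      rw [← Nat.cast_mul, Nat.mul_div_cancel' hdvd]
    rw [hcast]
    ring
  have hexp : (x + y) ^ p
      = y ^ p + ∑ i ∈ Finset.Ioo 0 p, x ^ i * y ^ (p - i) * (p.choose i : A) + x ^ p := by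
    rw [add_pow, Finset.sum_range_succ, Finset.range_eq_Ico,
      ← Finset.Ioo_insert_left hp.pos, Finset.sum_insert (by simp)]
    simp
  rw [deltaE, mul_neg, hsum, hexp]
  ring

/-- In `A` one cannot divide by `p`, so the value `(m - m ^ p) / p` of `δ m` is expressed as the
image of an integer `d` with `p * d = m - m ^ p`. -/
theorem IsDeltaStructure.map_natCast {p : ℕ} (hp : p.Prime) {A : Type*} [CommRing A] {δ : A → A}
    (hδ : IsDeltaStructure p δ) (m : ℕ) :
    ∃ d : ℤ, (p : ℤ) * d = (m : ℤ) - (m : ℤ) ^ p ∧ δ (m : A) = (d : A) := by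
  induction m with
  | zero => exact ⟨0, by simp [hp.ne_zero], by simp [hδ.map_zero]⟩
  | succ m ih =>
    obtain ⟨d, hd, hδd⟩ := ih
    refine ⟨d + deltaE p (m : ℤ) 1, ?_, ?_⟩
    · rw [mul_add, hd, mul_deltaE p hp]
      push_cast
      ring
    · rw [Nat.cast_succ, hδ.map_add, hδd, hδ.map_one]
      simp only [deltaE, add_zero, one_pow, mul_one, Int.cast_add, Int.cast_neg, Int.cast_sum,
        Int.cast_mul, Int.cast_pow, Int.cast_natCast]

/-- If `A` is a δ-ring (for the fixed prime `p`) and `p^n = 0` in `A` for some `n`, then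
`A` is the zero ring. -/
theorem stmt0 (p : ℕ) [Fact p.Prime] {A : Type*} [CommRing A] (δ : A → A)
    (hδ : IsDeltaStructure p δ) (n : ℕ) (h : (p : A) ^ n = 0) : (1 : A) = 0 := by
  have hp : p.Prime := Fact.out
  induction n with
  | zero => simpa using h
  | succ k ih =>
    apply ih
    obtain ⟨d, hd, hδd⟩ := hδ.map_natCast hp (p ^ (k + 1))
    -- `(k + 1) * p - 1 = (k + 1) + r`, written without truncated subtraction
    obtain ⟨r, hr⟩ : ∃ r, (k + 1) * p = (k + 1) + r + 1 :=
      Nat.exists_eq_add_of_le (show (k + 1) + 1 ≤ (k + 1) * p by nlinarith [hp.two_le]) |>.imp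
        fun r hr => by omega
    have hdval : d = (p : ℤ) ^ k - (p : ℤ) ^ (k + 1 + r) := by
      have hp0 : (p : ℤ) ≠ 0 := by exact_mod_cast hp.ne_zero
      apply mul_left_cancel₀ hp0
      rw [hd]
      push_cast
      rw [← pow_mul, hr]
      ring
    rw [Nat.cast_pow, h, hδ.map_zero, hdval] at hδd
    push_cast at hδd
    rw [pow_add, h, zero_mul, sub_zero] at hδd
    exact hδd.symm
end

section
/- Let A = ℤ_(p)[x₀, x₁, x₂, …] be the polynomial ring over ℤ_(p) (the localization of ℤ at the prime p) on countably many variables, and let φ : A → A be the unique ℤ_(p)-algebra endomorphism with φ(x_i) = x_i^p + p·x_{i+1} for all i ≥ 0 (this is the Frobenius lift of the free δ-ring ℤ_(p){x} on one generator x = x₀, whose δ-structure satisfies δ(x_i) = x_{i+1}). Then φ is faithfully flat: A is a faithfully flat module over itself when the module structure is given by restriction of scalars along φ. -/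
/-!
The map `φ` makes `A = R[x₀, x₁, …]` a *free* module over itself, with basis the monomials `x^a`
all of whose exponents satisfy `a i < p`; this holds over every nontrivial base ring `R`, for every
`p ≥ 2`, and a nonzero free module is faithfully flat.

By Euclidean division of exponents, every exponent `c` is uniquely `c = p • b + a` with all
`a i < p`. Since `φ(x_i) = x_i^p + p x_{i+1}` has leading form `x_i^p` for the total degree
(as `1 < p`), the product `φ(x^b) * x^a` equals `x^c` plus terms of total degree `< |c|`
(`phiGen_monomial_sub_mem`). The `R`-linear endomorphism `x^c ↦ φ(x^b) * x^a` is therefore the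
identity plus a map that strictly lowers the degree, hence bijective (`bijective_of_lowers`).
In other words, the products `φ(x^b) * x^a` form an `R`-basis of `A`, which says precisely that the
`x^a` form a basis of `A` over `A` along `φ`.
-/

instance instSpanIntPPrime (p : ℕ) [hp : Fact p.Prime] : (Ideal.span {(p : ℤ)}).IsPrime := by
  rw [Ideal.span_singleton_prime (by exact_mod_cast hp.out.ne_zero)]
  exact_mod_cast Nat.prime_iff_prime_int.mp hp.out

/-- `ℤ_(p)`, the localization of `ℤ` at the prime `p`. -/
abbrev ZpLoc (p : ℕ) [Fact p.Prime] : Type _ :=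
  Localization.AtPrime (Ideal.span {(p : ℤ)})

/-- The unique `ℤ_(p)`-algebra endomorphism `φ` of `A = ℤ_(p)[x₀, x₁, …]` with
`φ(x_i) = x_i^p + p·x_{i+1}` (the Frobenius lift of the free δ-ring on one generator). -/
noncomputable def phiFree (p : ℕ) [Fact p.Prime] :
    MvPolynomial ℕ (ZpLoc p) →ₐ[ZpLoc p] MvPolynomial ℕ (ZpLoc p) :=
  MvPolynomial.aeval fun i =>
    MvPolynomial.X i ^ p + (p : MvPolynomial ℕ (ZpLoc p)) * MvPolynomial.X (i + 1)

open MvPolynomial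

/-- A ring map `f : A → B` to a nonzero ring is faithfully flat as soon as `B` has a basis `v` over
`A` along `f`. -/
lemma faithfullyFlat_of_bijective_sum {A B S : Type*} [CommRing A] [CommRing B] [Nontrivial B]
    (f : A →+* B) (v : S → B)
    (h : Function.Bijective fun s : S →₀ A => s.sum fun a g => f g * v a) :
    @Module.FaithfullyFlat A B _ _ f.toModule := by
  let _ : Module A B := f.toModule
  have hL : Function.Bijective (Finsupp.linearCombination A v) := h
  have : Module.Free A B := Module.Free.of_equiv (LinearEquiv.ofBijective _ hL)
  infer_instance

section

variable {R : Type*} [CommRing R]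

/-- Polynomials all of whose monomials have total degree `< n`. The strict inequality makes the
zeroth step of this filtration the zero module. -/
noncomputable def degLT (R : Type*) [CommRing R] (n : ℕ) : Submodule R (MvPolynomial ℕ R) :=
  restrictSupport R {c : ℕ →₀ ℕ | c.degree < n}

lemma mem_degLT {n : ℕ} {f : MvPolynomial ℕ R} :
    f ∈ degLT R n ↔ ∀ c ∈ f.support, c.degree < n := by
  rw [degLT, mem_restrictSupport_iff]
  rfl

lemma degLT_mono {m n : ℕ} (h : m ≤ n) : degLT R m ≤ degLT R n := fun _ hf =>
  mem_degLT.2 fun c hc => (mem_degLT.1 hf c hc).trans_le h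

lemma mul_mem_degLT {m n : ℕ} {f g : MvPolynomial ℕ R} (hf : f ∈ degLT R m)
    (hg : g ∈ degLT R (n + 1)) : f * g ∈ degLT R (m + n) := by
  classical
  refine mem_degLT.2 fun c hc => ?_
  obtain ⟨a, ha, b, hb, rfl⟩ := Finset.mem_add.1 (support_mul f g hc)
  have h1 := mem_degLT.1 hf a ha
  have h2 := mem_degLT.1 hg b hb
  rw [map_add]
  omega

lemma monomial_mem_degLT (c : ℕ →₀ ℕ) (r : R) : monomial c r ∈ degLT R (c.degree + 1) := by
  classical
  refine mem_degLT.2 fun d hd => ?_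
  rw [Finset.mem_singleton.1 (support_monomial_subset hd)]
  omega

lemma exists_mem_degLT (f : MvPolynomial ℕ R) : ∃ n, f ∈ degLT R n :=
  ⟨f.support.sup Finsupp.degree + 1, mem_degLT.2 fun _ hc =>
    Nat.lt_succ_of_le (Finset.le_sup (f := Finsupp.degree) hc)⟩

/-- A linear endomorphism that preserves the leading form of every monomial is bijective. -/
lemma bijective_of_lowers (T : MvPolynomial ℕ R →ₗ[R] MvPolynomial ℕ R)
    (hT : ∀ c : ℕ →₀ ℕ, T (monomial c 1) - monomial c 1 ∈ degLT R c.degree) :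
    Function.Bijective T := by
  have key : ∀ n, ∀ f ∈ degLT R (n + 1), T f - f ∈ degLT R n := by
    intro n f hf
    have hsum : T f - f = ∑ c ∈ f.support, coeff c f • (T (monomial c 1) - monomial c 1) := by
      conv_lhs => rw [f.as_sum]
      rw [map_sum, ← Finset.sum_sub_distrib]
      refine Finset.sum_congr rfl fun c _ => ?_
      rw [smul_sub, ← map_smul, smul_monomial, smul_eq_mul, mul_one]
    rw [hsum]
    exact Submodule.sum_mem _ fun c hc => Submodule.smul_mem _ _
      (degLT_mono (Nat.le_of_lt_succ (mem_degLT.1 hf c hc)) (hT c))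
  have zero : ∀ f ∈ degLT R 0, f = 0 := fun f hf =>
    support_eq_empty.1 (Finset.eq_empty_of_forall_notMem fun c hc =>
      absurd (mem_degLT.1 hf c hc) (Nat.not_lt_zero _))
  constructor
  · rw [injective_iff_map_eq_zero]
    intro f hTf
    obtain ⟨n, hn⟩ := exists_mem_degLT f
    induction n with
    | zero => exact zero f hn
    | succ n ih =>
      have := key n f hn
      rw [hTf, zero_sub] at this
      exact ih (by simpa using this)
  · intro f
    obtain ⟨n, hn⟩ := exists_mem_degLT f
    induction n generalizing f with
    | zero => exact ⟨0, by rw [map_zero, zero f hn]⟩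
    | succ n ih =>
      obtain ⟨g, hg⟩ := ih _ (key n f hn)
      exact ⟨f - g, by rw [map_sub, hg, sub_sub_cancel]⟩

/-- The endomorphism `x_i ↦ x_i^p + p x_{i+1}` over an arbitrary base ring. -/
noncomputable def phiGen (R : Type*) [CommRing R] (p : ℕ) :
    MvPolynomial ℕ R →ₐ[R] MvPolynomial ℕ R :=
  aeval fun i => X i ^ p + (p : MvPolynomial ℕ R) * X (i + 1)

/-- `φ(x^b)` has leading form `x^(p b)`. -/
lemma phiGen_monomial_sub_mem {p : ℕ} (hp : 2 ≤ p) (b : ℕ →₀ ℕ) :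
    phiGen R p (monomial b 1) - monomial (p • b) 1 ∈ degLT R (p * b.degree) := by
  have add : ∀ b b' : ℕ →₀ ℕ,
      phiGen R p (monomial b 1) - monomial (p • b) 1 ∈ degLT R (p * b.degree) →
      phiGen R p (monomial b' 1) - monomial (p • b') 1 ∈ degLT R (p * b'.degree) →
      phiGen R p (monomial (b + b') 1) - monomial (p • (b + b')) 1
        ∈ degLT R (p * (b + b').degree) := by
    intro b b' h h'
    have hmon : ∀ c : ℕ →₀ ℕ, monomial (p • c) (1 : R) ∈ degLT R (p * c.degree + 1) := by
      intro c
      simpa using monomial_mem_degLT (R := R) (p • c) 1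
    have hb : phiGen R p (monomial b 1) ∈ degLT R (p * b.degree + 1) := by
      have := Submodule.add_mem _ (degLT_mono (Nat.le_succ _) h) (hmon b)
      simpa using this
    have e : phiGen R p (monomial (b + b') 1) - monomial (p • (b + b')) 1
        = (phiGen R p (monomial b' 1) - monomial (p • b') 1) * phiGen R p (monomial b 1)
          + (phiGen R p (monomial b 1) - monomial (p • b) 1) * monomial (p • b') 1 := by
      have e1 : monomial (b + b') (1 : R) = monomial b 1 * monomial b' 1 := by
        simp [monomial_mul]
      have e2 : monomial (p • (b + b')) (1 : R) = monomial (p • b) 1 * monomial (p • b') 1 := by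
        simp [monomial_mul]
      rw [e1, e2, map_mul]
      ring
    rw [e, map_add, mul_add]
    refine Submodule.add_mem _ ?_ (mul_mem_degLT h (hmon b'))
    rw [add_comm (p * b.degree)]
    exact mul_mem_degLT h' hb
  induction b using Finsupp.induction_linear with
  | zero => simp
  | add b b' h h' => exact add b b' h h'
  | single i n =>
    induction n with
    | zero => simp
    | succ n ih =>
      rw [Finsupp.single_add]
      refine add _ _ ih ?_
      have e : phiGen R p (monomial (Finsupp.single i 1) 1) - monomial (p • Finsupp.single i 1) 1
          = (p : R) • monomial (Finsupp.single (i + 1) 1) 1 := by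
        have : monomial (p • Finsupp.single i 1) (1 : R) = X i ^ p := by
          rw [X_pow_eq_monomial]; simp
        rw [this]
        change phiGen R p (X i) - X i ^ p = (p : R) • X (i + 1)
        rw [phiGen, aeval_X, add_sub_cancel_left, smul_eq_C_mul]
        simp
      rw [e]
      refine Submodule.smul_mem _ _ (degLT_mono ?_ (monomial_mem_degLT _ _))
      simpa using hp

/-- Exponents all of whose entries are `< p`: they index the basis of `A` along `φ`. -/
abbrev SmallExp (p : ℕ) := {a : ℕ →₀ ℕ // ∀ i, a i < p}

/-- Euclidean division of exponents by `p`: the bijection `(a, b) ↦ p • b + a`. -/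
noncomputable def expEquiv {p : ℕ} (hp : 2 ≤ p) :
    (Σ _ : SmallExp p, ℕ →₀ ℕ) ≃ (ℕ →₀ ℕ) where
  toFun x := p • x.2 + x.1.1
  invFun c := ⟨⟨c.mapRange (· % p) (Nat.zero_mod p), fun i => by
      simpa using Nat.mod_lt _ (by omega)⟩, c.mapRange (· / p) (Nat.zero_div p)⟩
  left_inv := by
    rintro ⟨⟨a, ha⟩, b⟩
    have hp0 : 0 < p := by omega
    have h1 : (p • b + a).mapRange (· % p) (Nat.zero_mod p) = a := by
      ext i; simp [Nat.mod_eq_of_lt (ha i)]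
    have h2 : (p • b + a).mapRange (· / p) (Nat.zero_div p) = b := by
      ext i; simp [Nat.mul_add_div hp0, Nat.div_eq_of_lt (ha i)]
    simp [h1, h2]
  right_inv c := by
    ext i
    simpa using Nat.div_add_mod (c i) p

lemma phiGen_bijective_sum {p : ℕ} (hp : 2 ≤ p) :
    Function.Bijective fun s : SmallExp p →₀ MvPolynomial ℕ R =>
      s.sum fun a g => (phiGen R p).toRingHom g * monomial a.1 1 := by
  -- The `R`-basis of the free `A`-module on `SmallExp p` given by monomials in each coordinate.
  let B := Finsupp.basis fun _ : SmallExp p => basisMonomials ℕ R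
  let e : (SmallExp p →₀ MvPolynomial ℕ R) ≃ₗ[R] MvPolynomial ℕ R :=
    B.equiv (basisMonomials ℕ R) (expEquiv hp)
  let L : (SmallExp p →₀ MvPolynomial ℕ R) →ₗ[R] MvPolynomial ℕ R :=
    Finsupp.lsum ℕ fun a => (LinearMap.mulRight R (monomial a.1 1)).comp (phiGen R p).toLinearMap
  have hL : ∀ a b, L (Finsupp.single a (monomial b 1))
      = phiGen R p (monomial b 1) * monomial a.1 1 := by
    intro a b
    simp [L]
  have he : ∀ a b, e (Finsupp.single a (monomial b 1)) = monomial (p • b + a.1) 1 := by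
    intro a b
    have : B ⟨a, b⟩ = Finsupp.single a (monomial b 1) := by simp [B]
    rw [← this, Module.Basis.equiv_apply]
    simp [expEquiv]
  have hT : Function.Bijective (L.comp e.symm.toLinearMap) := by
    refine bijective_of_lowers _ fun c => ?_
    obtain ⟨⟨a, b⟩, rfl⟩ := (expEquiv hp).surjective c
    have hs : e.symm (monomial (p • b + a.1) 1) = Finsupp.single a (monomial b 1) := by
      rw [LinearEquiv.symm_apply_eq, he]
    have hc : expEquiv hp ⟨a, b⟩ = p • b + a.1 := rfl
    rw [hc, LinearMap.comp_apply, LinearEquiv.coe_coe, hs, hL]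
    have e1 : monomial (p • b + a.1) (1 : R) = monomial (p • b) 1 * monomial a.1 1 := by
      simp [monomial_mul]
    rw [e1, ← sub_mul]
    have := mul_mem_degLT (phiGen_monomial_sub_mem (R := R) hp b) (monomial_mem_degLT a.1 1)
    simpa using this
  have : Function.Bijective L := by
    have h := hT.comp e.bijective
    have heq : (L.comp e.symm.toLinearMap : _ → _) ∘ e = L := by
      ext1 x; simp
    rwa [heq] at h
  exact this

end

/-- The Frobenius lift `φ` of the free δ-ring `ℤ_(p){x} = ℤ_(p)[x₀, x₁, …]` is faithfully
flat: `A` is a faithfully flat `A`-module via restriction of scalars along `φ`. -/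
theorem stmt1 (p : ℕ) [Fact p.Prime] :
    @Module.FaithfullyFlat (MvPolynomial ℕ (ZpLoc p)) (MvPolynomial ℕ (ZpLoc p)) _ _
      ((phiFree p).toRingHom.toModule) :=
  faithfullyFlat_of_bijective_sum (phiFree p).toRingHom _
    (phiGen_bijective_sum (R := ZpLoc p) (Fact.out : p.Prime).two_le)
end

section
/- Let B = ℚ[x₀, x₁, x₂, …] be the polynomial ring over ℚ on countably many variables and let φ : B → B be the unique ℚ-algebra endomorphism with φ(x_i) = x_i^p + p·x_{i+1} for all i ≥ 0. Then B is a polynomial ring on the elements x₀, φ(x₀), φ²(x₀), …; precisely, the ℚ-algebra homomorphism from a polynomial ring ℚ[y₀, y₁, y₂, …] to B sending y_i to φ^i(x₀) (the i-fold iterate of φ applied to x₀) is an isomorphism. -/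
/-!
Let `σ` be the shift `y_i ↦ y_{i+1}` of `ℚ[y₀, y₁, …]` and `F` the map `y_i ↦ φ^i(x₀)`, so that
`F ∘ σ = φ ∘ F`. Solving `φ(x_i) = x_i^p + p x_{i+1}` for `x_{i+1}` suggests the inverse `G` of
`F`: it sends `x_i` to `g_i`, where `g₀ = y₀` and `g_{i+1} = (σ(g_i) - g_i^p) / p`. By construction
`G ∘ φ = σ ∘ G`, whence `G(φ^i(x₀)) = σ^i(y₀) = y_i`; conversely `F(g_i) = x_i` by induction on `i`
(`map_ghostInv`), because `F` intertwines `σ` with `φ`.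
-/

/-- The unique `ℚ`-algebra endomorphism `φ` of `B = ℚ[x₀, x₁, …]` with
`φ(x_i) = x_i^p + p·x_{i+1}`. -/
noncomputable def phiQ (p : ℕ) : MvPolynomial ℕ ℚ →ₐ[ℚ] MvPolynomial ℕ ℚ :=
  MvPolynomial.aeval fun i =>
    MvPolynomial.X i ^ p + (p : MvPolynomial ℕ ℚ) * MvPolynomial.X (i + 1)

open MvPolynomial in
/-- The polynomials `g_i` expressing `x_i` in terms of the `y_j = φ^j(x₀)`: `g₀ = y₀` and
`g_{i+1} = (σ(g_i) - g_i^p) / p`, where the shift `σ : y_j ↦ y_{j+1}` is `rename Nat.succ`. -/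
noncomputable def ghostInv (p : ℕ) : ℕ → MvPolynomial ℕ ℚ
  | 0 => X 0
  | i + 1 => C (p : ℚ)⁻¹ * (rename Nat.succ (ghostInv p i) - ghostInv p i ^ p)

open MvPolynomial in
lemma aeval_ghostInv_phiQ (p : ℕ) (hp : p ≠ 0) (b : MvPolynomial ℕ ℚ) :
    aeval (R := ℚ) (ghostInv p) (phiQ p b) = rename Nat.succ (aeval (R := ℚ) (ghostInv p) b) := by
  have hC : (p : MvPolynomial ℕ ℚ) * C (p : ℚ)⁻¹ = 1 := by
    rw [← map_natCast (C : ℚ →+* MvPolynomial ℕ ℚ), ← C_mul,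
      mul_inv_cancel₀ (Nat.cast_ne_zero.mpr hp), C_1]
  have h : (aeval (R := ℚ) (ghostInv p)).comp (phiQ p) =
      (rename Nat.succ).comp (aeval (R := ℚ) (ghostInv p)) := by
    ext1 i
    simp only [AlgHom.comp_apply, phiQ, aeval_X, map_add, map_mul, map_pow, map_natCast, ghostInv]
    rw [← mul_assoc, hC]
    ring
  exact DFunLike.congr_fun h b

open MvPolynomial in
lemma aeval_iterate_rename_succ (p : ℕ) (b : MvPolynomial ℕ ℚ) :
    aeval (R := ℚ) (fun i : ℕ => (⇑(phiQ p))^[i] (X 0)) (rename Nat.succ b) =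
      phiQ p (aeval (R := ℚ) (fun i : ℕ => (⇑(phiQ p))^[i] (X 0)) b) := by
  have h : (aeval (R := ℚ) (fun i : ℕ => (⇑(phiQ p))^[i] (X 0))).comp (rename Nat.succ) =
      (phiQ p).comp (aeval (R := ℚ) (fun i : ℕ => (⇑(phiQ p))^[i] (X 0))) := by
    ext1 i
    simp only [AlgHom.comp_apply, rename_X, aeval_X, Nat.succ_eq_add_one,
      Function.iterate_succ_apply']
  exact DFunLike.congr_fun h b

open MvPolynomial in
lemma map_ghostInv (p : ℕ) (hp : p ≠ 0) (i : ℕ) :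
    aeval (R := ℚ) (fun i : ℕ => (⇑(phiQ p))^[i] (X 0)) (ghostInv p i) = X i := by
  have hC : C (p : ℚ)⁻¹ * (p : MvPolynomial ℕ ℚ) = 1 := by
    rw [← map_natCast (C : ℚ →+* MvPolynomial ℕ ℚ), ← C_mul,
      inv_mul_cancel₀ (Nat.cast_ne_zero.mpr hp), C_1]
  induction i with
  | zero => simp [ghostInv]
  | succ i ih =>
    rw [ghostInv, map_mul, map_sub, map_pow, aeval_iterate_rename_succ, ih, aeval_C, phiQ, aeval_X,
      add_sub_cancel_left, ← mul_assoc, algebraMap_eq, hC, one_mul]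

open MvPolynomial in
lemma aeval_ghostInv_iterate (p : ℕ) (hp : p ≠ 0) (i : ℕ) :
    aeval (R := ℚ) (ghostInv p) ((⇑(phiQ p))^[i] (X 0)) = X i := by
  induction i with
  | zero => exact aeval_X (ghostInv p) 0
  | succ i ih => rw [Function.iterate_succ_apply', aeval_ghostInv_phiQ p hp, ih, rename_X]

/-- `B = ℚ[x₀, x₁, …]` is a polynomial ring on the elements `x₀, φ(x₀), φ²(x₀), …`: the
`ℚ`-algebra homomorphism `ℚ[y₀, y₁, …] → B` sending `y_i ↦ φ^i(x₀)` is an isomorphism. -/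
theorem stmt2 (p : ℕ) (hp : p.Prime) :
    Function.Bijective
      (MvPolynomial.aeval (R := ℚ) (fun i : ℕ => (⇑(phiQ p))^[i] (MvPolynomial.X 0)) :
        MvPolynomial ℕ ℚ →ₐ[ℚ] MvPolynomial ℕ ℚ) := by
  set F : MvPolynomial ℕ ℚ →ₐ[ℚ] MvPolynomial ℕ ℚ :=
    MvPolynomial.aeval (R := ℚ) (fun i : ℕ => (⇑(phiQ p))^[i] (MvPolynomial.X 0)) with hF
  set G : MvPolynomial ℕ ℚ →ₐ[ℚ] MvPolynomial ℕ ℚ :=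
    MvPolynomial.aeval (R := ℚ) (ghostInv p) with hG
  have hGF : G.comp F = AlgHom.id ℚ _ := by
    ext1 i
    rw [AlgHom.comp_apply, AlgHom.id_apply, hF, MvPolynomial.aeval_X]
    exact aeval_ghostInv_iterate p hp.ne_zero i
  have hFG : F.comp G = AlgHom.id ℚ _ := by
    ext1 i
    rw [AlgHom.comp_apply, AlgHom.id_apply, hG, MvPolynomial.aeval_X]
    exact map_ghostInv p hp.ne_zero i
  exact Function.bijective_iff_has_inverse.mpr
    ⟨G, fun b => by rw [← AlgHom.comp_apply, hGF, AlgHom.id_apply],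
      fun b => by rw [← AlgHom.comp_apply, hFG, AlgHom.id_apply]⟩
end

section
/- Let A be a δ-ring with Frobenius lift φ, and let S ⊆ A be a multiplicative subset (submonoid) with φ(S) ⊆ S. Then the localization S⁻¹A admits a unique δ-structure such that the canonical map A → S⁻¹A is a map of δ-rings. Moreover, A → S⁻¹A is initial among maps of δ-rings from A under which every element of S becomes invertible: for every δ-ring B and map of δ-rings g : A → B with g(s) a unit for every s ∈ S, there is a unique map of δ-rings h : S⁻¹A → B with h composed with the canonical map equal to g. -/
universe u v

section DeltaLocalization

lemma natCast_mul_deltaE (p : ℕ) [hp : Fact p.Prime] {R : Type*} [CommRing R] (x y : R) :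
    (p : R) * deltaE p x y = x ^ p + y ^ p - (x + y) ^ p := by
  have hsum : ∑ i ∈ Finset.Ioo 0 p, (p : R) * (((p.choose i / p : ℕ) : R) * x ^ i * y ^ (p - i))
      = ∑ i ∈ Finset.Ioo 0 p, x ^ i * y ^ (p - i) * (p.choose i : R) := by
    refine Finset.sum_congr rfl fun i hi => ?_
    obtain ⟨h0, h1⟩ := Finset.mem_Ioo.mp hi
    have hd : p ∣ p.choose i := hp.out.dvd_choose_self h0.ne' h1
    have hc : (p : R) * ((p.choose i / p : ℕ) : R) = (p.choose i : R) := by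
      rw [← Nat.cast_mul, Nat.mul_div_cancel' hd]
    rw [← hc]
    ring
  have hset : Finset.range p = insert 0 (Finset.Ioo 0 p) := by
    have := hp.out.pos
    ext i
    simp only [Finset.mem_range, Finset.mem_insert, Finset.mem_Ioo]
    omega
  rw [deltaE, mul_neg, Finset.mul_sum, hsum, add_pow, Finset.sum_range_succ, hset,
    Finset.sum_insert (by simp)]
  simp only [pow_zero, Nat.sub_zero, Nat.choose_zero_right, Nat.cast_one, Nat.sub_self,
    Nat.choose_self]
  ring

lemma deltaE_mul_mul (p : ℕ) {R : Type*} [CommRing R] (s x y : R) :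
    deltaE p (x * s) (y * s) = s ^ p * deltaE p x y := by
  rw [deltaE, deltaE, mul_neg, Finset.mul_sum]
  refine congrArg Neg.neg (Finset.sum_congr rfl fun i hi => ?_)
  have hs : s ^ p = s ^ i * s ^ (p - i) := by
    rw [← pow_add, Nat.add_sub_cancel' (Finset.mem_Ioo.mp hi).2.le]
  rw [hs, mul_pow, mul_pow]
  ring

lemma map_deltaE (p : ℕ) {R R' : Type*} [CommRing R] [CommRing R'] (f : R →+* R') (x y : R) :
    f (deltaE p x y) = deltaE p (f x) (f y) := by
  simp [deltaE]

variable {p : ℕ} {A : Type*} [CommRing A] {δ : A → A} {S : Submonoid A}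

/-- `w` is the value that a δ-structure on `S⁻¹A` extending `δ` must take at `z`: the product rule
for `z * s = a` holds, with `w` in place of `δ'(z)`, for every presentation of `z` as a
fraction `a / s`. -/
def IsDeltaValue (p : ℕ) (δ : A → A) (S : Submonoid A) (z w : Localization S) : Prop :=
  ∀ a : A, ∀ s ∈ S, z * algebraMap A (Localization S) s = algebraMap A (Localization S) a →
    algebraMap A (Localization S) (s ^ p + p * δ s) * w
      + z ^ p * algebraMap A (Localization S) (δ s) = algebraMap A (Localization S) (δ a)

lemma exists_mul_eq (z : Localization S) : ∃ a : A, ∃ s ∈ S,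
    z * algebraMap A (Localization S) s = algebraMap A (Localization S) a := by
  obtain ⟨⟨a, s⟩, h⟩ := IsLocalization.surj S z
  exact ⟨a, s, s.2, h⟩

lemma isUnit_frob (hS : ∀ s ∈ S, s ^ p + (p : A) * δ s ∈ S) {s : A} (hs : s ∈ S) :
    IsUnit (algebraMap A (Localization S) (s ^ p + p * δ s)) :=
  IsLocalization.map_units (Localization S) ⟨_, hS s hs⟩

/-- Multiplicativity of the Frobenius lift. -/
lemma IsDeltaStructure.frob_mul (hδ : IsDeltaStructure p δ) (x y : A) :
    (x * y) ^ p + p * δ (x * y) = (x ^ p + p * δ x) * (y ^ p + p * δ y) := by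
  rw [hδ.map_mul, mul_pow]
  ring

lemma exists_isDeltaValue (hδ : IsDeltaStructure p δ)
    (hS : ∀ s ∈ S, s ^ p + (p : A) * δ s ∈ S) (z : Localization S) :
    ∃ w, IsDeltaValue p δ S z w := by
  obtain ⟨a₀, s₀, hs₀, h₀⟩ := exists_mul_eq z
  obtain ⟨w, hw⟩ : ∃ w, algebraMap A (Localization S) (s₀ ^ p + p * δ s₀) * w
      = algebraMap A (Localization S) (δ a₀) - z ^ p * algebraMap A (Localization S) (δ s₀) := by
    obtain ⟨v, hv⟩ := (isUnit_frob hS hs₀).exists_right_inv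
    exact ⟨v * _, by rw [← mul_assoc, hv, one_mul]⟩
  refine ⟨w, fun a s hs h => ?_⟩
  obtain ⟨u, hu⟩ : ∃ u : S, (u : A) * (s₀ * a) = u * (s * a₀) := by
    apply IsLocalization.exists_of_eq (S := Localization S)
    rw [map_mul, map_mul, ← h, ← h₀]
    ring
  -- `c` and `d` expand `a / s` and `a₀ / s₀` to one and the same fraction.
  obtain ⟨c, hc⟩ : ∃ c, c = (u : A) * s₀ := ⟨_, rfl⟩
  obtain ⟨d, hd⟩ : ∃ d, d = (u : A) * s := ⟨_, rfl⟩
  have hcS : c ∈ S := hc ▸ S.mul_mem u.2 hs₀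
  have hca : c * a = d * a₀ := by rw [hc, hd, mul_assoc, hu, mul_assoc]
  have hcs : c * s = d * s₀ := by rw [hc, hd]; ring
  have e₁ := congrArg (fun x => algebraMap A (Localization S) (δ x)) hca
  have e₂ := congrArg (fun x => algebraMap A (Localization S) (δ x)) hcs
  have e₃ := congrArg (fun x => algebraMap A (Localization S) (x ^ p + p * δ x)) hcs
  simp only [hδ.frob_mul] at e₃
  simp only [hδ.map_mul] at e₁ e₂
  have k := congrArg (· ^ p) h
  have k₀ := congrArg (· ^ p) h₀
  apply (isUnit_frob hS hcS).mul_left_cancel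
  simp only [map_add, map_mul, map_pow, map_natCast, mul_pow] at *
  linear_combination w * e₃ + z ^ p * e₂ - e₁
    + (algebraMap A (Localization S) d ^ p + p * algebraMap A (Localization S) (δ d)) * hw
    - algebraMap A (Localization S) (δ c) * k + algebraMap A (Localization S) (δ d) * k₀

/-- A single fraction representing `z` suffices to identify the δ-value at `z`. -/
lemma IsDeltaValue.eq_of_mul_eq (hS : ∀ s ∈ S, s ^ p + (p : A) * δ s ∈ S)
    {z w w' : Localization S} (hw : IsDeltaValue p δ S z w) {a s : A} (hs : s ∈ S)
    (h : z * algebraMap A (Localization S) s = algebraMap A (Localization S) a)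
    (hw' : algebraMap A (Localization S) (s ^ p + p * δ s) * w'
      + z ^ p * algebraMap A (Localization S) (δ s) = algebraMap A (Localization S) (δ a)) :
    w = w' :=
  (isUnit_frob hS hs).mul_left_cancel (add_right_cancel ((hw a s hs h).trans hw'.symm))

/-- Two elements of `S⁻¹A` have a common denominator. -/
lemma exists_mul_eq_pair (x y : Localization S) : ∃ a b : A, ∃ s ∈ S,
    x * algebraMap A (Localization S) s = algebraMap A (Localization S) a ∧
    y * algebraMap A (Localization S) s = algebraMap A (Localization S) b := by
  obtain ⟨a, s, hs, ha⟩ := exists_mul_eq x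
  obtain ⟨b, t, ht, hb⟩ := exists_mul_eq y
  refine ⟨a * t, b * s, s * t, S.mul_mem hs ht, ?_, ?_⟩
  · rw [map_mul, map_mul, ← ha]; ring
  · rw [map_mul, map_mul, ← hb]; ring

lemma isDeltaStructure_of_isDeltaValue [Fact p.Prime] (hδ : IsDeltaStructure p δ)
    (hS : ∀ s ∈ S, s ^ p + (p : A) * δ s ∈ S) {δ' : Localization S → Localization S}
    (h' : ∀ z, IsDeltaValue p δ S z (δ' z)) :
    IsDeltaStructure p δ' ∧
      ∀ a : A, δ' (algebraMap A (Localization S) a) = algebraMap A (Localization S) (δ a) := by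
  have compat : ∀ a : A,
      δ' (algebraMap A (Localization S) a) = algebraMap A (Localization S) (δ a) := fun a =>
    (h' _).eq_of_mul_eq hS S.one_mem (a := a) (by simp) (by simp [hδ.map_one])
  refine ⟨⟨?_, ?_, fun x y => ?_, fun x y => ?_⟩, compat⟩
  · simpa [hδ.map_zero] using compat 0
  · simpa [hδ.map_one] using compat 1
  · obtain ⟨a, s, hs, ha⟩ := exists_mul_eq x
    obtain ⟨b, t, ht, hb⟩ := exists_mul_eq y
    refine (h' _).eq_of_mul_eq hS (S.mul_mem hs ht) (a := a * b) ?_ ?_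
    · rw [map_mul, map_mul, ← ha, ← hb]; ring
    · have ea := h' x a s hs ha
      have eb := h' y b t ht hb
      rw [hδ.frob_mul, hδ.map_mul, hδ.map_mul]
      simp only [map_add, map_mul, map_pow, map_natCast] at *
      rw [← ea, ← eb, ← ha, ← hb]
      simp only [mul_pow]
      ring
  · obtain ⟨a, b, s, hs, ha, hb⟩ := exists_mul_eq_pair x y
    refine (h' _).eq_of_mul_eq hS hs (a := a + b) ?_ ?_
    · rw [map_add, ← ha, ← hb]; ring
    · have ea := h' x a s hs ha
      have eb := h' y b s hs hb
      have hE := natCast_mul_deltaE p x y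
      rw [hδ.map_add]
      simp only [map_add, map_mul, map_pow, map_natCast, map_deltaE] at *
      rw [← ha, ← hb, deltaE_mul_mul]
      linear_combination ea + eb + algebraMap A (Localization S) (δ s) * hE

/-- A ring homomorphism out of `S⁻¹A` that respects δ on the image of `A` respects δ. -/
lemma map_delta_of_compat (hS : ∀ s ∈ S, s ^ p + (p : A) * δ s ∈ S)
    {δ' : Localization S → Localization S} (hδ' : IsDeltaStructure p δ')
    (compat : ∀ a : A, δ' (algebraMap A (Localization S) a) = algebraMap A (Localization S) (δ a))
    {B : Type*} [CommRing B] {δB : B → B} (hδB : IsDeltaStructure p δB)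
    (h : Localization S →+* B)
    (hh : ∀ a : A, δB (h (algebraMap A (Localization S) a))
      = h (algebraMap A (Localization S) (δ a)))
    (z : Localization S) : h (δ' z) = δB (h z) := by
  obtain ⟨a, s, hs, ha⟩ := exists_mul_eq z
  have e₁ : h (δ' (z * algebraMap A (Localization S) s)) =
      δB (h z * h (algebraMap A (Localization S) s)) := by
    rw [← map_mul, ha, compat, hh]
  rw [hδ'.map_mul, hδB.map_mul, compat, hh] at e₁
  apply ((isUnit_frob hS hs).map h).mul_left_cancel
  simp only [map_add, map_mul, map_pow, map_natCast] at *
  linear_combination e₁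

end DeltaLocalization

/-- Let `A` be a δ-ring and `S ⊆ A` a multiplicative subset with `φ(S) ⊆ S`. Then the
localization `S⁻¹A` admits a unique δ-structure compatible with `A → S⁻¹A`; moreover,
`A → S⁻¹A` (with this δ-structure) is initial among maps of δ-rings from `A` inverting
every element of `S`. -/
theorem stmt4 (p : ℕ) [Fact p.Prime] {A : Type u} [CommRing A] (δ : A → A)
    (hδ : IsDeltaStructure p δ) (S : Submonoid A)
    (hS : ∀ s ∈ S, s ^ p + (p : A) * δ s ∈ S) :
    (∃! δ' : Localization S → Localization S,
      IsDeltaStructure p δ' ∧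
      ∀ a : A, δ' (algebraMap A (Localization S) a) = algebraMap A (Localization S) (δ a)) ∧
    (∀ δ' : Localization S → Localization S,
      (IsDeltaStructure p δ' ∧
        ∀ a : A, δ' (algebraMap A (Localization S) a) = algebraMap A (Localization S) (δ a)) →
      ∀ (B : Type v) [CommRing B] (δB : B → B), IsDeltaStructure p δB →
        ∀ g : A →+* B, (∀ a : A, g (δ a) = δB (g a)) → (∀ s ∈ S, IsUnit (g s)) →
          ∃! h : Localization S →+* B,
            (∀ z : Localization S, h (δ' z) = δB (h z)) ∧
            h.comp (algebraMap A (Localization S)) = g) := by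
  refine ⟨?_, ?_⟩
  · choose δ' h' using exists_isDeltaValue hδ hS
    have hδ' := isDeltaStructure_of_isDeltaValue hδ hS h'
    refine ⟨δ', hδ', fun δ'' hδ'' => funext fun z => ?_⟩
    exact map_delta_of_compat hS hδ''.1 hδ''.2 hδ'.1 (RingHom.id _) hδ'.2 z
  · rintro δ' ⟨hδ', compat⟩ B _ δB hδB g hg hunit
    have hlift : ∀ a, IsLocalization.lift (M := S) (S := Localization S) (g := g)
        (fun s => hunit s s.2) (algebraMap A (Localization S) a) = g a :=
      fun a => IsLocalization.lift_eq _ a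
    refine ⟨IsLocalization.lift (M := S) (g := g) fun s => hunit s s.2,
      ⟨map_delta_of_compat hS hδ' compat hδB _ fun a => ?_, RingHom.ext hlift⟩, ?_⟩
    · rw [hlift, hlift, hg]
    · rintro h ⟨-, hcomp⟩
      apply IsLocalization.ringHom_ext S
      rw [hcomp]
      exact (RingHom.ext hlift).symm
end

section
/- Let A be a δ-ring and let I ⊆ A be a finitely generated ideal containing p. Then the map δ : A → A is I-adically continuous: for every n ≥ 1 there exists m ≥ 1 such that for all x, y ∈ A with x − y ∈ I^m one has δ(x) − δ(y) ∈ I^n. -/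
theorem deltaE_mem (p : ℕ) {A : Type*} [CommRing A] (J : Ideal A) {x : A} (hx : x ∈ J) (y : A) :
    deltaE p x y ∈ J := by
  unfold deltaE
  refine J.neg_mem (J.sum_mem fun i hi => ?_)
  have hi0 : 0 < i := (Finset.mem_Ioo.mp hi).1
  exact J.mul_mem_right _ (J.mul_mem_left _ (J.pow_mem_of_mem hx i hi0))

theorem IsDeltaStructure.mem_pow {p : ℕ} [Fact p.Prime] {A : Type*} [CommRing A] {δ : A → A}
    (hδ : IsDeltaStructure p δ) (I : Ideal A) (hp : (p : A) ∈ I) (n : ℕ) :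
    ∀ x ∈ I ^ (n + 1), δ x ∈ I ^ n := by
  have hp0 : 0 < p := (Fact.out : p.Prime).pos
  induction n with
  | zero => simp
  | succ n ih =>
    intro x hx
    rw [pow_succ] at hx
    -- Membership in `I ^ (n + 1)` is carried along: it controls `deltaE` in the additive step.
    suffices h : x ∈ I ^ (n + 1) ∧ δ x ∈ I ^ (n + 1) from h.2
    refine Submodule.mul_induction_on hx (fun v hv u hu => ?_) (fun a b ha hb => ?_)
    · refine ⟨Ideal.mul_mem_right _ _ hv, ?_⟩
      have hφ : u ^ p + (p : A) * δ u ∈ I :=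
        I.add_mem (I.pow_mem_of_mem hu p hp0) (I.mul_mem_right _ hp)
      have h1 : δ v * (u ^ p + (p : A) * δ u) ∈ I ^ (n + 1) := by
        rw [pow_succ]
        exact Ideal.mul_mem_mul (ih v hv) hφ
      have h2 : v ^ p * δ u ∈ I ^ (n + 1) :=
        Ideal.mul_mem_right _ _ (Ideal.pow_mem_of_mem _ hv p hp0)
      have h3 : δ (v * u) = v ^ p * δ u + δ v * (u ^ p + (p : A) * δ u) := by
        rw [hδ.map_mul]; ring
      rw [h3]
      exact Ideal.add_mem _ h2 h1
    · refine ⟨Ideal.add_mem _ ha.1 hb.1, ?_⟩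
      rw [hδ.map_add]
      exact Ideal.add_mem _ (Ideal.add_mem _ ha.2 hb.2) (deltaE_mem p _ ha.1 b)

/-- If `A` is a δ-ring and `I ⊆ A` is a finitely generated ideal containing `p`, then
`δ` is `I`-adically continuous. -/
theorem stmt5 (p : ℕ) [Fact p.Prime] {A : Type*} [CommRing A] (δ : A → A)
    (hδ : IsDeltaStructure p δ) (I : Ideal A) (hfg : I.FG) (hp : (p : A) ∈ I) :
    ∀ n : ℕ, 1 ≤ n → ∃ m : ℕ, 1 ≤ m ∧
      ∀ x y : A, x - y ∈ I ^ m → δ x - δ y ∈ I ^ n := by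
  intro n _
  refine ⟨n + 1, Nat.le_add_left 1 n, fun x y hxy => ?_⟩
  have h := hδ.map_add (x - y) y
  rw [sub_add_cancel] at h
  have h' : δ x - δ y = δ (x - y) + deltaE p (x - y) y := by rw [h]; ring
  rw [h']
  exact Ideal.add_mem _ (hδ.mem_pow I hp n _ hxy)
    (deltaE_mem p _ (Ideal.pow_le_pow_right (Nat.le_succ n) hxy) y)
end

section
/- Let A be a δ-ring. Fix a distinguished element d ∈ A and a unit u ∈ A^×. If d and p lie in the Jacobson radical rad(A), then u·d is distinguished, i.e., δ(u·d) is a unit. -/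
/-- In a δ-ring `A` with `d` and `p` in the Jacobson radical, if `d` is distinguished
(`δ d` is a unit) and `u` is a unit, then `u * d` is distinguished. -/
theorem stmt7 (p : ℕ) [Fact p.Prime] {A : Type*} [CommRing A] (δ : A → A)
    (hδ : IsDeltaStructure p δ) (d u : A) (hd : IsUnit (δ d)) (hu : IsUnit u)
    (hdrad : d ∈ (⊥ : Ideal A).jacobson) (hprad : (p : A) ∈ (⊥ : Ideal A).jacobson) :
    IsUnit (δ (u * d)) := by
  rw [hδ.map_mul]
  have hp : p ≠ 0 := (Fact.out : p.Prime).ne_zero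
  have hr : d ^ p * δ u + (p : A) * δ u * δ d ∈ (⊥ : Ideal A).jacobson :=
    add_mem (Ideal.mul_mem_right _ _ (Ideal.pow_mem_of_mem _ hdrad p (Nat.pos_of_ne_zero hp)))
      (Ideal.mul_mem_right _ _ (Ideal.mul_mem_right _ _ hprad))
  -- The leading term `u ^ p * δ d` is a unit `v`; the other two terms lie in the Jacobson radical,
  -- so `δ (u * d) = v * (r * v⁻¹ + 1)` with `r` in the radical.
  obtain ⟨v, hv⟩ := (hu.pow p).mul hd
  have h := v.isUnit.mul (Ideal.mem_jacobson_bot.mp hr (↑v⁻¹ : A))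
  convert h using 1
  rw [add_assoc, ← hv, mul_add, mul_one, mul_left_comm, Units.mul_inv, mul_one, add_comm]
end

section
/- Let A be a δ-ring with a distinguished element d ∈ A. Assume d = f·h for some f, h ∈ A with f and p lying in the Jacobson radical rad(A). Then f is distinguished (δ(f) is a unit) and h is a unit. -/
/-- In a δ-ring `A`, if a distinguished element `d` factors as `d = f * h` with `f` and `p`
in the Jacobson radical, then `f` is distinguished and `h` is a unit. -/
theorem stmt8 (p : ℕ) [Fact p.Prime] {A : Type*} [CommRing A] (δ : A → A)
    (hδ : IsDeltaStructure p δ) (d f h : A) (hd : IsUnit (δ d)) (hfac : d = f * h)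
    (hfrad : f ∈ (⊥ : Ideal A).jacobson) (hprad : (p : A) ∈ (⊥ : Ideal A).jacobson) :
    IsUnit (δ f) ∧ IsUnit h := by
  have hp : p ≠ 0 := (Fact.out : p.Prime).ne_zero
  -- By the product rule, `δ d` and `h ^ p * δ f` differ by the element `r` of the radical.
  obtain ⟨r, hr, hsum⟩ : ∃ r ∈ (⊥ : Ideal A).jacobson, δ d = h ^ p * δ f + r := by
    refine ⟨f ^ p * δ h + (p : A) * (δ f * δ h), ?_, ?_⟩
    · exact add_mem (Ideal.mul_mem_right _ _ (Ideal.pow_mem_of_mem _ hfrad p hp.bot_lt))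
        (Ideal.mul_mem_right _ _ hprad)
    · rw [hfac, hδ.map_mul]
      ring
  have hunit : IsUnit (h ^ p * δ f) := by
    obtain ⟨u, hu⟩ := hd
    have h1 : IsUnit (r * (-(↑u⁻¹ : A)) + 1) := Ideal.mem_jacobson_bot.mp hr _
    have h2 : h ^ p * δ f = u * (r * (-(↑u⁻¹ : A)) + 1) := by
      linear_combination -hsum - hu + r * u.mul_inv
    rw [h2]
    exact u.isUnit.mul h1
  exact ⟨isUnit_of_mul_isUnit_right hunit,
    (isUnit_pow_iff hp).mp (isUnit_of_mul_isUnit_left hunit)⟩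
end

section
/- Let A be a reduced δ-ring (A has no nonzero nilpotent elements). Then A is p-torsionfree: for every x ∈ A, p·x = 0 implies x = 0. -/
theorem natCast_mul_deltaE_int (p : ℕ) (hp : p.Prime) (x y : ℤ) :
    (p : ℤ) * deltaE p x y = x ^ p + y ^ p - (x + y) ^ p := by
  have hsum : (x + y) ^ p
      = y ^ p + (∑ i ∈ Finset.Ioo 0 p, x ^ i * y ^ (p - i) * (p.choose i : ℤ)) + x ^ p := by
    have h0 : Finset.Ioo 0 p = Finset.Ico 1 p := by ext; simp; omega
    rw [add_pow, Finset.sum_range_succ, Finset.range_eq_Ico,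
      Finset.sum_eq_sum_Ico_succ_bot hp.pos, h0]
    simp
  rw [hsum, deltaE, mul_neg, Finset.mul_sum]
  have hterm : ∀ i ∈ Finset.Ioo 0 p,
      (p : ℤ) * (((p.choose i / p : ℕ) : ℤ) * x ^ i * y ^ (p - i))
        = x ^ i * y ^ (p - i) * (p.choose i : ℤ) := by
    intro i hi
    rw [Finset.mem_Ioo] at hi
    have hdiv : (p : ℤ) * ((p.choose i / p : ℕ) : ℤ) = (p.choose i : ℤ) := by
      exact_mod_cast Nat.mul_div_cancel' (hp.dvd_choose_self hi.1.ne' hi.2)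
    rw [← hdiv]
    ring
  rw [Finset.sum_congr rfl hterm]
  ring

theorem intCast_deltaE (p : ℕ) {A : Type*} [CommRing A] (x y : ℤ) :
    ((deltaE p x y : ℤ) : A) = deltaE p (x : A) (y : A) := by
  simp only [deltaE, Int.cast_neg, Int.cast_sum, Int.cast_mul, Int.cast_pow, Int.cast_natCast]

/-- On natural numbers, `δ` is given by the Fermat quotient `(n - n ^ p) / p`. The division takes
place in `ℤ`, so this determines `δ n` even when `A` has `p`-torsion. -/
theorem IsDeltaStructure.exists_int_map_natCast {p : ℕ} (hp : p.Prime) {A : Type*} [CommRing A]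
    {δ : A → A} (hδ : IsDeltaStructure p δ) (n : ℕ) :
    ∃ d : ℤ, δ (n : A) = (d : A) ∧ (p : ℤ) * d = (n : ℤ) - (n : ℤ) ^ p := by
  induction n with
  | zero => exact ⟨0, by simp [hδ.map_zero], by simp [hp.ne_zero]⟩
  | succ n ih =>
    obtain ⟨d, hd, hpd⟩ := ih
    refine ⟨d + deltaE p (n : ℤ) 1, ?_, ?_⟩
    · rw [Nat.cast_succ, hδ.map_add, hδ.map_one, hd, Int.cast_add, intCast_deltaE]
      simp
    · rw [mul_add, natCast_mul_deltaE_int p hp, hpd]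
      push_cast
      ring

/-- A reduced δ-ring is `p`-torsionfree. -/
theorem stmt11 (p : ℕ) [Fact p.Prime] {A : Type*} [CommRing A] (δ : A → A)
    (hδ : IsDeltaStructure p δ) (hred : IsReduced A) :
    ∀ x : A, (p : A) * x = 0 → x = 0 := by
  intro x hx
  have hp : p.Prime := Fact.out
  obtain ⟨k, hk⟩ : ∃ k, p = k + 2 := Nat.exists_eq_add_of_le' hp.two_le
  obtain ⟨d, hd, hpd⟩ := hδ.exists_int_map_natCast hp p
  have hd1 : d = 1 - (p : ℤ) * (p : ℤ) ^ k := by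
    have hp0 : (p : ℤ) ≠ 0 := by exact_mod_cast hp.ne_zero
    apply mul_left_cancel₀ hp0
    have hpow : (p : ℤ) ^ p = (p : ℤ) ^ (k + 2) := congrArg _ hk
    rw [hpd, hpow]
    ring
  have hδp : δ (p : A) = 1 - (p : A) * (p : A) ^ k := by
    rw [hd, hd1]
    push_cast
    ring
  have hmul := hδ.map_mul (p : A) x
  rw [hx, hδ.map_zero, hδp] at hmul
  have hxp : (p : A) * x ^ p = 0 := by
    have hpow : x ^ p = x * x ^ (k + 1) := by rw [← pow_succ', ← hk]
    rw [hpow, ← mul_assoc, hx, zero_mul]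
  have hpp : (p : A) ^ p = (p : A) * (p : A) ^ (k + 1) := by rw [← pow_succ', ← hk]
  rw [hpp] at hmul
  have hsq : (x ^ p) ^ 2 = 0 := by
    linear_combination (-(x ^ p)) * hmul + ((p : A) ^ k * x ^ p - (p : A) ^ (k + 1) * δ x
      - (1 - (p : A) * (p : A) ^ k) * δ x) * hxp
  exact eq_zero_of_pow_eq_zero (eq_zero_of_pow_eq_zero hsq)
end

section
/- Fix a δ-ring A. (i) For every x ∈ A and every n ≥ 0, δ(x^{p^n}) lies in the ideal p^n·A. (ii) If moreover A is p-adically separated (the intersection of the ideals p^n·A over all n is zero) and y ∈ A admits a p^n-th root for every n ≥ 0 (for each n there exists z ∈ A with z^{p^n} = y), then δ(y) = 0. -/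
/-- The first-order expansion of `δ(x^m)`, with exponent `m + 1` so that no subtraction occurs. -/
theorem IsDeltaStructure.map_pow_succ {p : ℕ} {A : Type*} [CommRing A] {δ : A → A}
    (hδ : IsDeltaStructure p δ) (x : A) (m : ℕ) :
    ∃ c : A, δ (x ^ (m + 1)) = ((m + 1 : ℕ) : A) * (x ^ p) ^ m * δ x + p * δ x * c := by
  induction m with
  | zero => exact ⟨0, by simp⟩
  | succ m ih =>
    obtain ⟨c, hc⟩ := ih
    refine ⟨x ^ p * c + δ (x ^ (m + 1)), ?_⟩
    rw [pow_succ x (m + 1), hδ.map_mul, ← pow_mul x (m + 1) p, mul_comm (m + 1) p, pow_mul]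
    push_cast at hc ⊢
    linear_combination x ^ p * hc

theorem IsDeltaStructure.mul_dvd_map_pow {p : ℕ} [Fact p.Prime] {A : Type*} [CommRing A]
    {δ : A → A} (hδ : IsDeltaStructure p δ) (x : A) : (p : A) * δ x ∣ δ (x ^ p) := by
  obtain ⟨m, hm⟩ := Nat.exists_eq_succ_of_ne_zero (Fact.out : p.Prime).ne_zero
  obtain ⟨c, hc⟩ := hδ.map_pow_succ x m
  rw [← Nat.succ_eq_add_one, ← hm] at hc
  exact ⟨(x ^ p) ^ m + c, by rw [hc]; ring⟩

/-- (i) In a δ-ring `A`, `δ(x^(p^n)) ∈ p^n·A` for all `x` and `n`.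
(ii) If moreover `A` is `p`-adically separated and `y` admits a `p^n`-th root for all
`n`, then `δ(y) = 0`. -/
theorem stmt12 (p : ℕ) [Fact p.Prime] {A : Type*} [CommRing A] (δ : A → A)
    (hδ : IsDeltaStructure p δ) :
    (∀ (x : A) (n : ℕ), δ (x ^ p ^ n) ∈ Ideal.span {(p : A) ^ n}) ∧
    ((∀ a : A, (∀ n : ℕ, a ∈ Ideal.span {(p : A) ^ n}) → a = 0) →
      ∀ y : A, (∀ n : ℕ, ∃ z : A, z ^ p ^ n = y) → δ y = 0) := by
  have main : ∀ (x : A) (n : ℕ), δ (x ^ p ^ n) ∈ Ideal.span {(p : A) ^ n} := by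
    intro x n
    rw [Ideal.mem_span_singleton]
    induction n with
    | zero => simp
    | succ n ih =>
      rw [pow_succ p n, pow_mul, pow_succ' (p : A) n]
      exact (mul_dvd_mul_left _ ih).trans (hδ.mul_dvd_map_pow _)
  refine ⟨main, fun hsep y hy => hsep _ fun n => ?_⟩
  obtain ⟨z, rfl⟩ := hy n
  exact main z n
end

section
/- Let p be a prime, let S be a perfect commutative ring of characteristic p (the Frobenius x ↦ x^p on S is bijective), and let W(S) be the ring of p-typical Witt vectors of S with Witt vector Frobenius F : W(S) → W(S). For d ∈ W(S) the following are equivalent: (a) there exists a unit u ∈ W(S)^× with F(d) = d^p + p·u, i.e., d is a distinguished element of the δ-ring W(S) (whose δ is δ(d) = (F(d) − d^p)/p, well defined since W(S) is p-torsionfree); (b) the Witt coordinate d.coeff 1 of d is a unit of S. Condition (b) says exactly that the coefficient a₁ of p in the Teichmüller expansion d = Σ_{i≥0} [a_i]·p^i is a unit, since a₁^p equals the Witt coordinate d.coeff 1. -/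
/-!
Write `d = [a₀] + p·e`, with `a₀ = d.coeff 0`. Then `F(d) = [a₀]^p + p·F(e)`, while
`d ≡ [a₀] mod p` gives `d^p ≡ [a₀]^p mod p²`. Hence `F(d) - d^p = p·(F(e) - p·c)` for some `c`,
and since `W(S)` is `p`-torsionfree, `d` is distinguished exactly when `F(e) - p·c` is a unit.
As `W(S)` is `p`-adically complete with `W(S)/p = S`, that holds exactly when the constant
coefficient `e₀^p` of `F(e) - p·c` is a unit of `S`, and `e₀^p` is the Witt coordinate `d.coeff 1`.
-/

/-- Units of `W(S)` are detected modulo `p`, because `p` lies in the Jacobson radical. -/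
lemma isUnit_witt_iff_coeff_zero (p : ℕ) [Fact p.Prime] (S : Type*) [CommRing S] [CharP S p]
    [PerfectRing S p] (x : WittVector p S) : IsUnit x ↔ IsUnit (x.coeff 0) := by
  constructor
  · intro h
    simpa using h.map (WittVector.constantCoeff : WittVector p S →+* S)
  · rintro ⟨v, hv⟩
    have hmem : x * WittVector.teichmuller p (↑v⁻¹ : S) - 1 ∈
        Ideal.span {(p : WittVector p S)} := by
      rw [← WittVector.ker_constantCoeff, RingHom.mem_ker]
      rw [map_sub, map_mul, map_one, WittVector.constantCoeff_apply,
        WittVector.constantCoeff_apply, WittVector.teichmuller_coeff_zero, ← hv, Units.mul_inv,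
        sub_self]
    have hj := IsAdicComplete.le_jacobson_bot (Ideal.span {(p : WittVector p S)}) hmem
    have hu := Ideal.mem_jacobson_bot.1 hj 1
    rw [mul_one, sub_add_cancel] at hu
    exact isUnit_of_mul_isUnit_left hu

/-- The first two terms of the Teichmüller expansion, with the error term `e` recording the
Witt coordinate `d.coeff 1` as the `p`-th power of its constant coefficient. -/
lemma exists_eq_teichmuller_add_p_mul (p : ℕ) [Fact p.Prime] (S : Type*) [CommRing S] [CharP S p]
    [PerfectRing S p] (d : WittVector p S) :
    ∃ e : WittVector p S, d = WittVector.teichmuller p (d.coeff 0) + p * e ∧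
      d.coeff 1 = e.coeff 0 ^ p := by
  have hmem : d - WittVector.teichmuller p (d.coeff 0) ∈ Ideal.span {(p : WittVector p S)} := by
    rw [← WittVector.ker_constantCoeff, RingHom.mem_ker]
    rw [map_sub, WittVector.constantCoeff_apply, WittVector.constantCoeff_apply,
      WittVector.teichmuller_coeff_zero, sub_self]
  obtain ⟨e, he⟩ := Ideal.mem_span_singleton.1 hmem
  have hd : d = WittVector.teichmuller p (d.coeff 0) + p * e := by rw [← he]; ring
  refine ⟨e, hd, ?_⟩
  -- The supports of `[a₀]` and `p·e` are disjoint, so their coordinates simply add.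
  have hadd := WittVector.coeff_add_of_disjoint 1 (WittVector.teichmuller p (d.coeff 0))
    (p * e) (by
      intro n
      rcases n with _ | n
      · right; rw [mul_comm]; exact WittVector.mul_charP_coeff_zero e
      · left; exact WittVector.teichmuller_coeff_pos p _ _ n.succ_pos)
  rw [← hd, WittVector.teichmuller_coeff_pos p _ _ one_pos, zero_add, mul_comm] at hadd
  rw [hadd]
  exact WittVector.mul_charP_coeff_succ e 0

/-- Let `S` be a perfect ring of characteristic `p` and `W(S)` its ring of `p`-typical Witt
vectors with Witt vector Frobenius `F`. For `d ∈ W(S)`, the following are equivalent: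
(a) there is a unit `u` with `F(d) = d^p + p·u` (i.e., `d` is distinguished);
(b) the Witt coordinate `d.coeff 1` is a unit of `S`. -/
theorem stmt13 (p : ℕ) [Fact p.Prime] (S : Type*) [CommRing S] [CharP S p]
    (hperf : Function.Bijective (fun x : S => x ^ p))
    (d : WittVector p S) :
    (∃ u : (WittVector p S)ˣ, WittVector.frobenius d = d ^ p + (p : WittVector p S) * u) ↔
      IsUnit (d.coeff 1) := by
  have : ExpChar S p := ExpChar.prime Fact.out
  have : PerfectRing S p := ⟨hperf⟩
  obtain ⟨e, hd, h1⟩ := exists_eq_teichmuller_add_p_mul p S d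
  set t := WittVector.teichmuller p (d.coeff 0) with ht
  have hFt : WittVector.frobenius t = t ^ p := by
    rw [WittVector.frobenius_eq_map_frobenius, ht, WittVector.map_teichmuller, ← map_pow,
      frobenius_def]
  obtain ⟨c, hc⟩ : (p : WittVector p S) ^ 2 ∣ d ^ p - t ^ p := by
    have := dvd_sub_pow_of_dvd_sub (p := p) (a := d) (b := t)
      ⟨e, by nth_rewrite 1 [hd]; ring⟩ 1
    simpa using this
  have hF : WittVector.frobenius d = d ^ p + p * (WittVector.frobenius e - p * c) := by
    have : WittVector.frobenius d = t ^ p + p * WittVector.frobenius e := by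
      nth_rewrite 1 [hd]
      rw [map_add, map_mul, hFt, map_natCast]
    linear_combination this - hc
  have h0 : (WittVector.frobenius e - p * c).coeff 0 = d.coeff 1 := by
    have : WittVector.constantCoeff (WittVector.frobenius e - (p : WittVector p S) * c) =
        WittVector.constantCoeff (WittVector.frobenius e) := by
      rw [map_sub, map_mul, map_natCast, CharP.cast_eq_zero, zero_mul, sub_zero]
    rw [WittVector.constantCoeff_apply, WittVector.constantCoeff_apply,
      WittVector.coeff_frobenius_charP] at this
    rw [this, h1]
  rw [← h0, ← isUnit_witt_iff_coeff_zero]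
  constructor
  · rintro ⟨u, hu⟩
    have : WittVector.frobenius e - p * c = u := by
      rw [← sub_eq_zero]
      apply WittVector.eq_zero_of_p_mul_eq_zero
      linear_combination hu - hF
    rw [this]
    exact u.isUnit
  · rintro ⟨u, hu⟩
    exact ⟨u, by rw [hu]; exact hF⟩
end

section
/- Let A be a p-torsionfree δ-ring that is p-adically separated (the intersection of the ideals p^n·A over all n is zero) and such that A/pA is reduced. Fix a distinguished element d ∈ A (δ(d) is a unit). Then: (1) d is a nonzerodivisor in A, i.e., f·d = 0 implies f = 0; (2) the quotient R = A/dA satisfies R[p^∞] = R[p]: for every f ∈ A, if p^n·f ∈ dA for some n ≥ 1, then p·f ∈ dA. -/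
theorem dvd_of_dvd_delta_mul {p : ℕ} [Fact p.Prime] {A : Type*} [CommRing A] {δ : A → A}
    (hδ : IsDeltaStructure p δ) (hred : IsReduced (A ⧸ Ideal.span {(p : A)}))
    {d : A} (hd : IsUnit (δ d)) {g : A} (h : (p : A) ∣ d * g) (h' : (p : A) ∣ δ (d * g)) :
    (p : A) ∣ g := by
  have hp : p ≠ 0 := (Fact.out : p.Prime).ne_zero
  have h1 : (p : A) ∣ (d * g) ^ p := dvd_pow h hp
  have h2 : (p : A) ∣ g ^ (p + p) * δ d := by
    rw [hδ.map_mul] at h'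
    have h3 := dvd_sub (h'.mul_left (g ^ p)) (h1.mul_right (δ g))
    have h4 := dvd_sub h3 (Dvd.intro (g ^ p * δ d * δ g) rfl : (p : A) ∣ _)
    convert h4 using 1
    ring
  have h5 : (p : A) ∣ g ^ (p + p) := (hd.dvd_mul_right).1 h2
  rw [← Ideal.mem_span_singleton, ← Ideal.Quotient.eq_zero_iff_mem] at h5 ⊢
  rw [map_pow] at h5
  exact eq_zero_of_pow_eq_zero h5

theorem dvd_delta_sq_mul {p : ℕ} [Fact p.Prime] {A : Type*} [CommRing A] {δ : A → A}
    (hδ : IsDeltaStructure p δ) (f : A) : (p : A) ∣ δ ((p : A) ^ 2 * f) := by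
  have hp : p ≠ 0 := (Fact.out : p.Prime).ne_zero
  have h0 : (p : A) ∣ (p : A) ^ p := dvd_pow_self _ hp
  have h1 : (p : A) ∣ δ ((p : A) ^ 2) := by
    rw [sq, hδ.map_mul]
    exact dvd_add (dvd_add (h0.mul_right _) (h0.mul_right _))
      ((dvd_mul_right _ _).mul_right _)
  rw [hδ.map_mul]
  refine dvd_add (dvd_add (Dvd.dvd.mul_right ?_ _) (h1.mul_left _))
    ((dvd_mul_right _ _).mul_right _)
  exact dvd_pow (dvd_pow_self _ two_ne_zero) hp

/-- Let `A` be a `p`-torsionfree, `p`-adically separated δ-ring with `A/pA` reduced, and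
let `d` be a distinguished element. Then `d` is a nonzerodivisor and `R = A/dA` satisfies
`R[p^∞] = R[p]`. -/
theorem stmt14 (p : ℕ) [Fact p.Prime] {A : Type*} [CommRing A] (δ : A → A)
    (hδ : IsDeltaStructure p δ)
    (htf : ∀ x : A, (p : A) * x = 0 → x = 0)
    (hsep : ∀ a : A, (∀ n : ℕ, a ∈ Ideal.span {(p : A) ^ n}) → a = 0)
    (hred : IsReduced (A ⧸ Ideal.span {(p : A)}))
    (d : A) (hd : IsUnit (δ d)) :
    (∀ f : A, f * d = 0 → f = 0) ∧
    (∀ (f : A) (n : ℕ), 1 ≤ n → (p : A) ^ n * f ∈ Ideal.span {d} →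
      (p : A) * f ∈ Ideal.span {d}) := by
  constructor
  · intro f hf
    refine hsep f fun n => ?_
    rw [Ideal.mem_span_singleton]
    induction n generalizing f with
    | zero => simp
    | succ n ih =>
      have hdf : d * f = 0 := by rw [mul_comm, hf]
      obtain ⟨g, rfl⟩ : (p : A) ∣ f :=
        dvd_of_dvd_delta_mul hδ hred hd (by simp [hdf]) (by simp [hdf, hδ.map_zero])
      rw [pow_succ']
      exact mul_dvd_mul_left _ (ih g (htf _ (by rw [← mul_assoc, hf])))
  · intro f n hn h
    induction n, hn using Nat.le_induction generalizing f with
    | base => simpa using h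
    | succ n hn ih =>
      refine ih f ?_
      rw [Ideal.mem_span_singleton] at h ⊢
      obtain ⟨m, rfl⟩ := Nat.exists_eq_add_of_le' hn
      obtain ⟨g, hg⟩ := h
      have hg' : d * g = (p : A) ^ 2 * ((p : A) ^ m * f) := by rw [← hg]; ring
      obtain ⟨k, rfl⟩ : (p : A) ∣ g := by
        refine dvd_of_dvd_delta_mul hδ hred hd ?_ ?_ <;> rw [hg']
        · exact (dvd_pow_self _ two_ne_zero).mul_right _
        · exact dvd_delta_sq_mul hδ _
      refine ⟨k, sub_eq_zero.1 (htf _ ?_)⟩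
      linear_combination hg
end

section
/- Let Λ = ℤ_(p)[x₀, x₁, x₂, …], the free δ-ring ℤ_(p){x} on the generator x = x₀ over the localization ℤ_(p) of ℤ at p, with δ(x_i) = x_{i+1} and Frobenius lift φ(x_i) = x_i^p + p·x_{i+1}. Let B = Λ[1/p], on which φ extends and δ_B(z) := (φ(z) − z^p)/p is defined (p is invertible in B). Then the smallest subring of B containing the image of Λ together with x^p/p and stable under δ_B (equivalently, containing Λ and φ(x)/p = x^p/p + δ(x)) coincides with the subring of B generated by the image of Λ and the divided powers x^n/n! for all n ≥ 1; the latter subring is the pd-envelope D_{Λ}((x)) of the ideal (x) ⊆ Λ. In particular, this divided-power subring is stable under δ_B and under φ. -/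
/-- `Λ = ℤ_(p)[x₀, x₁, …]`, the free δ-ring `ℤ_(p){x}` on the generator `x = x₀`. -/
abbrev Lam (p : ℕ) [Fact p.Prime] : Type _ := MvPolynomial ℕ (ZpLoc p)

/-- The Frobenius lift `φ` of `Λ`, determined by `φ(x_i) = x_i^p + p·x_{i+1}`. -/
noncomputable def phiLam (p : ℕ) [Fact p.Prime] : Lam p →ₐ[ZpLoc p] Lam p :=
  MvPolynomial.aeval fun i =>
    MvPolynomial.X i ^ p + (p : Lam p) * MvPolynomial.X (i + 1)

/-- `B = Λ[1/p]`. -/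
abbrev Bloc (p : ℕ) [Fact p.Prime] : Type _ := Localization.Away ((p : Lam p))

/-- The canonical map `Λ → B = Λ[1/p]`. -/
noncomputable def iotaLam (p : ℕ) [Fact p.Prime] : Lam p →+* Bloc p :=
  algebraMap (Lam p) (Bloc p)

/-- The extension of the Frobenius lift `φ` to `B = Λ[1/p]`. -/
noncomputable def phiBloc (p : ℕ) [Fact p.Prime] : Bloc p →+* Bloc p :=
  Localization.awayLift ((iotaLam p).comp (phiLam p).toRingHom) ((p : Lam p))
    (by
      have h1 : ((iotaLam p).comp (phiLam p).toRingHom) ((p : Lam p)) =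
          iotaLam p ((p : Lam p)) := by
        simp [RingHom.comp_apply]
      rw [h1]
      exact IsLocalization.Away.algebraMap_isUnit (S := Bloc p) ((p : Lam p)))

/-- The δ-structure `δ_B(z) = (φ(z) − z^p)/p` on `B = Λ[1/p]`, where `p` is invertible. -/
noncomputable def deltaBloc (p : ℕ) [Fact p.Prime] (z : Bloc p) : Bloc p :=
  Ring.inverse ((p : Bloc p)) * (phiBloc p z - z ^ p)

/-- The subring of `B` generated by the image of `Λ` and the divided powers `x^n/n!`
(`n ≥ 1`), i.e. the pd-envelope `D_Λ((x))` of the ideal `(x) ⊆ Λ`. -/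
noncomputable def pdEnvelope (p : ℕ) [Fact p.Prime] : Subring (Bloc p) :=
  Subring.closure (Set.range (iotaLam p) ∪
    {z : Bloc p | ∃ n : ℕ, 1 ≤ n ∧
      (n.factorial : Bloc p) * z = iotaLam p (MvPolynomial.X 0 ^ n)})

section

variable (p : ℕ) [hp : Fact p.Prime]

/-- If `v_p(a) ≤ v_p(b)`, then `b / a` lies in `ℤ_(p)`. -/
lemma exists_zpLoc_mul_eq {a b : ℕ} (ha : a ≠ 0)
    (hab : padicValNat p a ≤ padicValNat p b) : ∃ c : ZpLoc p, c * (a : ZpLoc p) = b := by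
  obtain ⟨b', hb'⟩ : p ^ padicValNat p a ∣ b := (pow_dvd_pow p hab).trans pow_padicValNat_dvd
  obtain ⟨a', ha'⟩ : p ^ padicValNat p a ∣ a := pow_padicValNat_dvd
  have hna : ¬ p ∣ a' := by
    rintro ⟨k, rfl⟩
    refine pow_succ_padicValNat_not_dvd (p := p) ha ⟨k, ?_⟩
    rw [pow_succ, mul_assoc]
    exact ha'
  have hu : IsUnit ((a' : ℕ) : ZpLoc p) := by
    have h := (IsLocalization.AtPrime.isUnit_to_map_iff (ZpLoc p)
      (Ideal.span {(p : ℤ)}) (a' : ℤ)).2 (by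
        intro h
        rw [SetLike.mem_coe, Ideal.mem_span_singleton] at h
        exact hna (by exact_mod_cast h))
    simpa using h
  obtain ⟨u, hu⟩ := hu
  refine ⟨b' * ↑(u⁻¹), ?_⟩
  have h1 : (a : ZpLoc p) = (p : ZpLoc p) ^ padicValNat p a * a' := by
    simpa using congrArg (Nat.cast (R := ZpLoc p)) ha'
  have h2 : (b : ZpLoc p) = (p : ZpLoc p) ^ padicValNat p a * b' := by
    simpa using congrArg (Nat.cast (R := ZpLoc p)) hb'
  have h3 : (↑(u⁻¹) : ZpLoc p) * u = 1 := Units.inv_mul u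
  rw [h1, h2, ← hu]
  linear_combination (b' : ZpLoc p) * (p : ZpLoc p) ^ padicValNat p a * h3

/-- The structure map `ℤ_(p) → Λ → B`. -/
noncomputable def constB : ZpLoc p →+* Bloc p := (iotaLam p).comp MvPolynomial.C

lemma isUnit_p : IsUnit ((p : ℕ) : Bloc p) := by
  have h := IsLocalization.Away.algebraMap_isUnit (S := Bloc p) ((p : Lam p))
  simpa using h

lemma p_mul_inverse : (p : Bloc p) * Ring.inverse (p : Bloc p) = 1 :=
  Ring.mul_inverse_cancel _ (isUnit_p p)

lemma isUnit_factorial (n : ℕ) : IsUnit ((n.factorial : ℕ) : Bloc p) := by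
  obtain ⟨c, hc⟩ := exists_zpLoc_mul_eq p (b := p ^ padicValNat p n.factorial)
    n.factorial_ne_zero (by rw [padicValNat.prime_pow])
  have h := congrArg (constB p) hc
  simp only [map_mul, map_natCast, Nat.cast_pow, map_pow] at h
  exact isUnit_of_mul_isUnit_right (h ▸ (isUnit_p p).pow _)

lemma phiBloc_iota (f : Lam p) : phiBloc p (iotaLam p f) = iotaLam p (phiLam p f) := by
  unfold phiBloc iotaLam
  simp [Localization.awayLift, IsLocalization.Away.lift]

lemma p_mul_delta (z : Bloc p) : (p : Bloc p) * deltaBloc p z = phiBloc p z - z ^ p := by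
  rw [deltaBloc, ← mul_assoc, p_mul_inverse, one_mul]

lemma iota_mem (f : Lam p) : iotaLam p f ∈ pdEnvelope p :=
  Subring.subset_closure (Or.inl ⟨f, rfl⟩)

lemma divPow_mem {n : ℕ} (hn : 1 ≤ n) {z : Bloc p}
    (hz : (n.factorial : Bloc p) * z = iotaLam p (MvPolynomial.X 0 ^ n)) : z ∈ pdEnvelope p :=
  Subring.subset_closure (Or.inr ⟨n, hn, hz⟩)

lemma exists_divPow (n : ℕ) (w : Bloc p) : ∃ z : Bloc p, (n.factorial : Bloc p) * z = w := by
  obtain ⟨u, hu⟩ := isUnit_factorial p n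
  exact ⟨↑u⁻¹ * w, by rw [← hu, Units.mul_inv_cancel_left]⟩

lemma pow_div_p_mem :
    Ring.inverse ((p : Bloc p)) * iotaLam p (MvPolynomial.X 0 ^ p) ∈ pdEnvelope p := by
  obtain ⟨z, hz⟩ := exists_divPow p p (iotaLam p (MvPolynomial.X 0 ^ p))
  have hzm := divPow_mem p hp.out.one_le hz
  have h1 : ((p.factorial : ℕ) : Bloc p) = p * (p - 1).factorial := by
    rw [← Nat.mul_factorial_pred hp.out.ne_zero, Nat.cast_mul]
  have h2 : Ring.inverse ((p : Bloc p)) * iotaLam p (MvPolynomial.X 0 ^ p)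
      = (p - 1).factorial * z := by
    rw [← hz, h1]
    linear_combination ((p - 1).factorial : Bloc p) * z * p_mul_inverse p
  rw [h2]
  exact mul_mem (natCast_mem _ _) hzm

/-- `φ (x ^ n / n!) ∈ p D` for `n ≥ 1`. -/
lemma phi_divPow {n : ℕ} (hn : 1 ≤ n) {z : Bloc p}
    (hz : (n.factorial : Bloc p) * z = iotaLam p (MvPolynomial.X 0 ^ n)) :
    ∃ d ∈ pdEnvelope p, phiBloc p z = p * d := by
  have hlt := padicValNat_factorial_lt_of_ne_zero p (n := n) (by omega)
  obtain ⟨c, hc⟩ := exists_zpLoc_mul_eq p (b := p ^ (n - 1))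
    n.factorial_ne_zero (by rw [padicValNat.prime_pow]; omega)
  have hc' := congrArg (constB p) hc
  simp only [map_mul, map_natCast, Nat.cast_pow, map_pow] at hc'
  set y := Ring.inverse ((p : Bloc p)) * iotaLam p (MvPolynomial.X 0 ^ p) with hy
  refine ⟨constB p c * (y + iotaLam p (MvPolynomial.X 1)) ^ n, mul_mem (iota_mem p _)
    (pow_mem (add_mem (pow_div_p_mem p) (iota_mem p _)) n), ?_⟩
  apply (isUnit_factorial p n).mul_left_cancel
  have h1 := congrArg (phiBloc p) hz
  rw [map_mul, map_natCast, phiBloc_iota] at h1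
  have h2 : iotaLam p (phiLam p (MvPolynomial.X 0))
      = p * (y + iotaLam p (MvPolynomial.X 1)) := by
    simp only [phiLam, MvPolynomial.aeval_X, map_add, map_mul, map_natCast, hy]
    linear_combination (-iotaLam p (MvPolynomial.X 0 ^ p)) * p_mul_inverse p
  rw [h1, map_pow, map_pow, h2, mul_pow]
  obtain ⟨k, rfl⟩ : ∃ k, n = k + 1 := ⟨n - 1, by omega⟩
  rw [Nat.add_sub_cancel] at hc'
  linear_combination (-(p : Bloc p)) * (y + iotaLam p (MvPolynomial.X 1)) ^ (k + 1) * hc'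

/-- `(x ^ n / n!) ^ p ∈ p D` for `n ≥ 1`. -/
lemma divPow_pow {n : ℕ} (hn : 1 ≤ n) {z : Bloc p}
    (hz : (n.factorial : Bloc p) * z = iotaLam p (MvPolynomial.X 0 ^ n)) :
    ∃ d ∈ pdEnvelope p, z ^ p = p * d := by
  obtain ⟨g, hg⟩ := exists_divPow p (p * n) (iotaLam p (MvPolynomial.X 0 ^ (p * n)))
  have hgm := divPow_mem p (Nat.mul_pos hp.out.pos hn) hg
  have hb : (((p * n).factorial : ℕ) : Bloc p)
      = Nat.uniformBell p n * (n.factorial : Bloc p) ^ p * (p * (p - 1).factorial) := by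
    rw [← Nat.uniformBell_mul_eq p (n := n) (by omega), ← Nat.mul_factorial_pred hp.out.ne_zero]
    push_cast
    ring
  refine ⟨Nat.uniformBell p n * (p - 1).factorial * g,
    mul_mem (mul_mem (natCast_mem _ _) (natCast_mem _ _)) hgm, ?_⟩
  apply ((isUnit_factorial p n).pow p).mul_left_cancel
  rw [← mul_pow, hz, ← map_pow, ← pow_mul, mul_comm n p, ← hg, hb]
  ring

lemma phi_mem_pdEnvelope {t : Bloc p} (ht : t ∈ pdEnvelope p) :
    phiBloc p t ∈ pdEnvelope p := by
  have hle : pdEnvelope p ≤ (pdEnvelope p).comap (phiBloc p) := by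
    refine Subring.closure_le.2 ?_
    rintro _ (⟨f, rfl⟩ | ⟨n, hn, hz⟩)
    · refine Subring.mem_comap.2 ?_
      rw [phiBloc_iota]
      exact iota_mem p _
    · obtain ⟨d, hd, h⟩ := phi_divPow p hn hz
      refine Subring.mem_comap.2 ?_
      rw [h]
      exact mul_mem (natCast_mem _ _) hd
  exact hle ht

/-- The `p`-th power map is a ring endomorphism of any commutative ring in which `p = 0`
(the zero ring, which does not have characteristic `p`, included). -/
lemma exists_frobenius_hom {R : Type*} [CommRing R] (h0 : (p : R) = 0) :
    ∃ F : R →+* R, ∀ x, F x = x ^ p := by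
  rcases subsingleton_or_nontrivial R with hs | hn
  · exact ⟨RingHom.id R, fun x => Subsingleton.elim _ _⟩
  · have : CharP R p := by
      obtain ⟨q, hq⟩ := CharP.exists R
      have hdvd : q ∣ p := (CharP.cast_eq_zero_iff R q p).1 h0
      rcases (Nat.dvd_prime hp.out).1 hdvd with h1 | h1
      · exact absurd h1 (CharP.char_ne_one R q)
      · exact h1 ▸ hq
    exact ⟨frobenius R p, fun x => frobenius_def p x⟩

lemma delta_mem_pdEnvelope {t : Bloc p} (ht : t ∈ pdEnvelope p) :
    deltaBloc p t ∈ pdEnvelope p := by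
  let D := pdEnvelope p
  let φD : D →+* D := (phiBloc p).restrict D D (fun _ h => phi_mem_pdEnvelope p h)
  let ιD : Lam p →+* D := (iotaLam p).codRestrict D (iota_mem p)
  let q := Ideal.Quotient.mk (Ideal.span {((p : ℕ) : D)})
  have hq0 : q (p : D) = 0 :=
    Ideal.Quotient.eq_zero_iff_mem.2 (Ideal.mem_span_singleton_self _)
  obtain ⟨F, hF⟩ := exists_frobenius_hom p (R := D ⧸ Ideal.span {((p : ℕ) : D)})
    (by rw [← hq0, map_natCast])
  have hLam : (q.comp φD).comp ιD = (F.comp q).comp ιD := by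
    refine MvPolynomial.ringHom_ext' ?_ ?_
    -- A ring homomorphism out of `ℤ_(p)` is determined by its restriction to `ℤ`
    · exact IsLocalization.ringHom_ext (Ideal.span {(p : ℤ)}).primeCompl
        (RingHom.ext_int _ _)
    · intro i
      have h1 : φD (ιD (MvPolynomial.X i))
          = ιD (MvPolynomial.X i) ^ p + (p : D) * ιD (MvPolynomial.X (i + 1)) := by
        apply Subtype.ext
        change phiBloc p (iotaLam p (MvPolynomial.X i))
          = iotaLam p (MvPolynomial.X i) ^ p + ((p : ℕ) : D) * iotaLam p (MvPolynomial.X (i + 1))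
        rw [phiBloc_iota]
        simp [phiLam]
      simp only [RingHom.comp_apply, h1, hF, map_add, map_mul, map_pow, hq0, zero_mul, add_zero]
  have key : ∀ (z : Bloc p) (hz : z ∈ D), (q.comp φD) ⟨z, hz⟩ = (F.comp q) ⟨z, hz⟩ := by
    intro z hz
    induction hz using Subring.closure_induction with
    | mem z hz =>
      have hzD : z ∈ D := Subring.subset_closure hz
      rcases hz with ⟨f, rfl⟩ | ⟨n, hn, hz⟩
      · exact RingHom.congr_fun hLam f
      · obtain ⟨d, hd, h⟩ := phi_divPow p hn hz
        obtain ⟨e, he, h'⟩ := divPow_pow p hn hz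
        have h1 : φD ⟨z, hzD⟩ = (p : D) * ⟨d, hd⟩ := Subtype.ext (by simpa [φD] using h)
        have h2 : (⟨z, hzD⟩ : D) ^ p = (p : D) * ⟨e, he⟩ := Subtype.ext (by simpa using h')
        rw [RingHom.comp_apply, RingHom.comp_apply, hF, ← map_pow, h1, h2, map_mul, map_mul, hq0,
          zero_mul, zero_mul]
    | zero => exact (map_zero (q.comp φD)).trans (map_zero (F.comp q)).symm
    | one => exact (map_one (q.comp φD)).trans (map_one (F.comp q)).symm
    | add x y hx hy h1 h2 =>
      have := congrArg₂ (· + ·) h1 h2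
      simp only [← map_add] at this
      exact this
    | neg x hx h1 =>
      have := congrArg (- ·) h1
      simp only [← map_neg] at this
      exact this
    | mul x y hx hy h1 h2 =>
      have := congrArg₂ (· * ·) h1 h2
      simp only [← map_mul] at this
      exact this
  have h := key t ht
  rw [RingHom.comp_apply, RingHom.comp_apply, hF, ← map_pow, Ideal.Quotient.eq,
    Ideal.mem_span_singleton] at h
  obtain ⟨d, hd⟩ := h
  have hd' : phiBloc p t - t ^ p = p * (d : Bloc p) := by
    simpa [φD] using congrArg (Subtype.val) hd
  have : deltaBloc p t = d := by
    apply (isUnit_p p).mul_left_cancel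
    rw [p_mul_delta, hd']
  rw [this]
  exact d.2

/-- In a `δ`-stable subring `T ⊇ Λ` of `B`, an element `z` with `z ^ p / p ∈ T` has all its
divided powers in `T`. -/
lemma exists_dividedPower_mem (T : Subring (Bloc p))
    (hT : Set.range (iotaLam p) ⊆ (T : Set (Bloc p))) (hδ : ∀ t ∈ T, deltaBloc p t ∈ T) (n : ℕ) :
    ∀ z ∈ T, ∀ y ∈ T, (p : Bloc p) * y = z ^ p →
      ∃ w ∈ T, (n.factorial : Bloc p) * w = z ^ n := by
  induction n using Nat.strong_induction_on with
  | _ n ih =>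
  intro z hz y hy hzy
  rcases Nat.eq_zero_or_pos n with rfl | hn
  · exact ⟨1, one_mem _, by simp⟩
  have hφz : phiBloc p z = p * (y + deltaBloc p z) := by
    linear_combination -p_mul_delta p z - hzy
  obtain ⟨k, hk⟩ : ∃ k, p = k + 2 := ⟨p - 2, by have := hp.out.two_le; omega⟩
  have hφy : phiBloc p y = p * ((p : Bloc p) ^ k * (y + deltaBloc p z) ^ p) := by
    apply (isUnit_p p).mul_left_cancel
    have h := congrArg (phiBloc p) hzy
    rw [map_mul, map_natCast, map_pow, hφz, mul_pow] at h
    have h3 : (p : Bloc p) ^ p = p * (p * (p : Bloc p) ^ k) := by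
      rw [← pow_succ', ← pow_succ', ← hk]
    rw [h, h3]
    ring
  -- `y ^ p / p`, computed from `δ y`
  have hyp : (p : Bloc p) * ((p : Bloc p) ^ k * (y + deltaBloc p z) ^ p - deltaBloc p y)
      = y ^ p := by
    linear_combination -p_mul_delta p y - hφy
  obtain ⟨w, hw, hwy⟩ := ih (n / p) (Nat.div_lt_self hn hp.out.one_lt) y hy _
    (sub_mem (mul_mem (pow_mem (natCast_mem _ _) _) (pow_mem (add_mem hy (hδ z hz)) _))
      (hδ y hy)) hyp
  have hval : padicValNat p n.factorial = padicValNat p (p ^ (n / p) * (n / p).factorial) := by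
    rw [padicValNat.mul (pow_ne_zero _ hp.out.ne_zero) (Nat.factorial_ne_zero _),
      padicValNat.prime_pow]
    conv_lhs => rw [← Nat.div_add_mod n p]
    rw [padicValNat_factorial_mul_add _ (Nat.mod_lt n hp.out.pos), padicValNat_factorial_mul,
      add_comm]
  obtain ⟨c, hc⟩ := exists_zpLoc_mul_eq p n.factorial_ne_zero hval.le
  have hc' := congrArg (constB p) hc
  simp only [map_mul, map_natCast, Nat.cast_mul, Nat.cast_pow, map_pow] at hc'
  refine ⟨constB p c * w * z ^ (n % p),
    mul_mem (mul_mem (hT ⟨_, rfl⟩) hw) (pow_mem hz _), ?_⟩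
  calc (n.factorial : Bloc p) * (constB p c * w * z ^ (n % p))
      = (p : Bloc p) ^ (n / p) * ((n / p).factorial * w) * z ^ (n % p) := by
        linear_combination w * z ^ (n % p) * hc'
    _ = z ^ n := by
        rw [hwy, ← mul_pow, hzy, ← pow_mul, ← pow_add, Nat.div_add_mod]

end

/-- The smallest subring of `B = Λ[1/p]` containing the image of `Λ` together with `x^p/p`
and stable under `δ_B` coincides with the subring generated by the image of `Λ` and the
divided powers `x^n/n!` for `n ≥ 1` (the pd-envelope of `(x) ⊆ Λ`); in particular the
latter is stable under `δ_B` and under `φ`. -/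
theorem stmt16 (p : ℕ) [Fact p.Prime] :
    (sInf {T : Subring (Bloc p) |
        Set.range (iotaLam p) ⊆ (T : Set (Bloc p)) ∧
        Ring.inverse ((p : Bloc p)) * iotaLam p (MvPolynomial.X 0 ^ p) ∈ T ∧
        ∀ t ∈ T, deltaBloc p t ∈ T} = pdEnvelope p) ∧
    (∀ t ∈ pdEnvelope p, deltaBloc p t ∈ pdEnvelope p) ∧
    (∀ t ∈ pdEnvelope p, phiBloc p t ∈ pdEnvelope p) := by
  refine ⟨le_antisymm (sInf_le ⟨?_, pow_div_p_mem p, fun t ht => delta_mem_pdEnvelope p ht⟩)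
    (le_sInf ?_), fun t ht => delta_mem_pdEnvelope p ht, fun t ht => phi_mem_pdEnvelope p ht⟩
  · rintro _ ⟨f, rfl⟩
    exact iota_mem p f
  · rintro T ⟨hT, hy, hδ⟩
    refine Subring.closure_le.2 (Set.union_subset hT ?_)
    rintro z ⟨n, -, hz⟩
    obtain ⟨w, hw, hwz⟩ := exists_dividedPower_mem p T hT hδ n (iotaLam p (MvPolynomial.X 0))
      (hT ⟨_, rfl⟩) _ hy (by rw [← mul_assoc, p_mul_inverse, one_mul, map_pow])
    have : z = w := (isUnit_factorial p n).mul_left_cancel (by rw [hz, hwz, map_pow])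
    exact this ▸ hw
end

section
/- Let p be a prime and let A be a commutative ring that is p-torsionfree and p-adically complete (i.e., the canonical map A → lim_n A/p^n A is an isomorphism) such that A/pA is a perfect ring of characteristic p. Then there exists a ring isomorphism e : A ≅ W(A/pA) onto the ring of p-typical Witt vectors of A/pA whose composition with the canonical projection W(A/pA) → A/pA (the zeroth truncation, a ring homomorphism) equals the quotient map A → A/pA. -/
/-!
The isomorphism is the inverse of Fontaine's map `θ : W(A♭) → A`, transported along `A♭ ≅ A/pA`.

Since Frobenius is bijective on `A/pA`, the projection `A♭ → A/pA` from the inverse limit perfection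
is an isomorphism (`preTilt_coeff_zero_bijective`), and `θ` is surjective by
`surjective_fontaineTheta`. As `θ` reduces modulo `p` to the projection of the zeroth coefficient, a
Witt vector in its kernel is divisible by `p`; torsion-freeness of `A` puts the quotient back in the
kernel. Hence the kernel lies in every `p ^ n W(A♭)`, so it vanishes
(`fontaineTheta_injective`).
-/

open WittVector

theorem preTilt_coeff_zero_bijective (p : ℕ) [Fact p.Prime] {A : Type*} [CommRing A]
    [Fact ¬IsUnit (p : A)] (hperf : Function.Bijective (frobenius (ModP A p) p)) :
    Function.Bijective (PreTilt.coeff (O := A) (p := p) 0) := by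
  refine ⟨fun x y h => ?_, Perfection.coeff_surjective hperf.2 0⟩
  refine Perfection.ext fun n => ?_
  induction n with
  | zero => exact h
  | succ n ih =>
    apply hperf.1
    simp only [frobenius_def]
    exact (Perfection.coeff_pow_p' x n).trans (ih.trans (Perfection.coeff_pow_p' y n).symm)

theorem fontaineTheta_injective (p : ℕ) [Fact p.Prime] {A : Type*} [CommRing A]
    [Fact ¬IsUnit (p : A)] [IsAdicComplete (Ideal.span {(p : A)}) A]
    (htf : ∀ x : A, (p : A) * x = 0 → x = 0)
    (hinj : Function.Injective (PreTilt.coeff (O := A) (p := p) 0)) :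
    Function.Injective (fontaineTheta A p) := by
  have divisible : ∀ (n : ℕ) (x : WittVector p (PreTilt A p)), fontaineTheta A p x = 0 →
      x ∈ Ideal.span {(p ^ n : WittVector p (PreTilt A p))} := by
    intro n
    induction n with
    | zero => simp
    | succ n ih =>
      intro x hx
      have hx0 : x.coeff 0 = 0 := hinj (by rw [← mk_fontaineTheta, hx, map_zero, map_zero])
      obtain ⟨y, rfl⟩ := Ideal.mem_span_singleton.1 ((mem_span_p_iff_coeff_zero_eq_zero x).2 hx0)
      obtain ⟨z, rfl⟩ := Ideal.mem_span_singleton.1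
        (ih y (htf _ (by simpa only [map_mul, map_natCast] using hx)))
      exact Ideal.mem_span_singleton.2 ⟨z, by ring⟩
  refine (injective_iff_map_eq_zero _).2 fun x hx => ?_
  ext n
  simpa using (mem_span_p_pow_iff_le_coeff_eq_zero x (n + 1)).1 (divisible _ x hx) n n.lt_succ_self

/-- Let `A` be a `p`-torsionfree, `p`-adically complete commutative ring such that `A/pA`
is a perfect ring of characteristic `p`. Then there is a ring isomorphism
`e : A ≅ W(A/pA)` whose composition with the zeroth truncation `W(A/pA) → A/pA` is the
quotient map `A → A/pA`. -/
theorem stmt17 (p : ℕ) [Fact p.Prime] {A : Type*} [CommRing A]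
    (htf : ∀ x : A, (p : A) * x = 0 → x = 0)
    (hcomplete : IsAdicComplete (Ideal.span {(p : A)}) A)
    [CharP (A ⧸ Ideal.span {(p : A)}) p]
    (hperf : Function.Bijective (fun x : A ⧸ Ideal.span {(p : A)} => x ^ p)) :
    ∃ e : A ≃+* WittVector p (A ⧸ Ideal.span {(p : A)}),
      ∀ a : A, (e a).coeff 0 = Ideal.Quotient.mk (Ideal.span {(p : A)}) a := by
  have : Fact ¬IsUnit (p : A) := ⟨fun h => by
    have : Nontrivial (A ⧸ Ideal.span {(p : A)}) :=
      CharP.nontrivial_of_char_ne_one (Fact.out : p.Prime).ne_one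
    exact Ideal.Quotient.nontrivial_iff.1 this (Ideal.span_singleton_eq_top.2 h)⟩
  have hcoeff := preTilt_coeff_zero_bijective p (A := A) hperf
  have hθ : Function.Bijective (fontaineTheta A p) :=
    ⟨fontaineTheta_injective p htf hcoeff.1, surjective_fontaineTheta hperf.2⟩
  have hW : Function.Bijective (WittVector.map (p := p) (PreTilt.coeff (O := A) (p := p) 0)) :=
    ⟨map_injective _ hcoeff.1, map_surjective _ hcoeff.2⟩
  refine ⟨(RingEquiv.ofBijective _ hθ).symm.trans (RingEquiv.ofBijective _ hW), fun a => ?_⟩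
  obtain ⟨x, rfl⟩ := hθ.2 a
  have hx : (RingEquiv.ofBijective _ hθ).symm (fontaineTheta A p x) = x :=
    (RingEquiv.ofBijective _ hθ).symm_apply_apply x
  rw [RingEquiv.trans_apply, hx, mk_fontaineTheta]
  rfl
end

section
/- Let p be a prime. Let A and B be p-torsionfree, p-adically complete commutative rings such that A/pA and B/pB are perfect rings of characteristic p. Let φ_A : A → A and φ_B : B → B be ring endomorphisms lifting the Frobenius, i.e., φ_A(x) ≡ x^p mod pA for all x ∈ A and φ_B(y) ≡ y^p mod pB for all y ∈ B. Then every ring homomorphism f : A → B satisfies f ∘ φ_A = φ_B ∘ f. In particular (taking A = B and f = id), such a ring carries at most one Frobenius lift, and every ring homomorphism between perfect p-complete δ-rings is automatically a map of δ-rings. -/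
/-!
Both `f ∘ φ_A` and `φ_B ∘ f` are ring homomorphisms `A → B` congruent to `x ↦ f(x)^p` modulo `p`.
Two ring homomorphisms `g`, `h` that agree modulo `p` agree modulo every `p ^ n`
(`pow_dvd_sub_of_dvd_sub`): since Frobenius is surjective on `A/pA`, any `x` can be written
`x = y ^ (p ^ n) + p z`; here `g(y) ≡ h(y)` mod `p` forces
`g(y) ^ (p ^ n) ≡ h(y) ^ (p ^ n)` mod `p ^ (n + 1)`, and induction on `n` handles `p z`.
As `B` is `p`-adically separated, the two homomorphisms are equal.
-/

/-- Ring homomorphisms that agree modulo `p` agree modulo all powers of `p`, as soon as Frobenius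
is surjective on the source modulo `p`. -/
theorem pow_dvd_sub_of_dvd_sub (p : ℕ) {A B : Type*} [CommRing A] [CommRing B]
    (hsurj : Function.Surjective (fun x : A ⧸ Ideal.span {(p : A)} => x ^ p))
    (g h : A →+* B) (hgh : ∀ x, (p : B) ∣ g x - h x) (n : ℕ) (x : A) :
    (p : B) ^ n ∣ g x - h x := by
  induction n generalizing x with
  | zero => simp
  | succ n ih =>
    obtain ⟨y', hy'⟩ := hsurj.iterate n (Ideal.Quotient.mk _ x)
    obtain ⟨y, rfl⟩ := Ideal.Quotient.mk_surjective y'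
    rw [pow_iterate] at hy'
    have hmem : x - y ^ p ^ n ∈ Ideal.span {(p : A)} := by
      rw [← Ideal.Quotient.eq, map_pow]
      exact hy'.symm
    obtain ⟨z, hz⟩ := Ideal.mem_span_singleton.mp hmem
    have hx : x = y ^ p ^ n + p * z := by rw [← hz]; ring
    have key : g x - h x = (g y ^ p ^ n - h y ^ p ^ n) + p * (g z - h z) := by
      rw [hx]
      simp only [map_add, map_mul, map_pow, map_natCast]
      ring
    rw [key]
    refine dvd_add (dvd_sub_pow_of_dvd_sub (hgh y) n) ?_
    rw [pow_succ']
    exact mul_dvd_mul_left _ (ih z)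

/-- Let `A`, `B` be `p`-torsionfree, `p`-adically complete rings with `A/pA` and `B/pB`
perfect of characteristic `p`, and let `φ_A`, `φ_B` be Frobenius lifts on `A` and `B`.
Then every ring homomorphism `f : A → B` satisfies `f ∘ φ_A = φ_B ∘ f`. -/
theorem stmt18 (p : ℕ) [Fact p.Prime] {A B : Type*} [CommRing A] [CommRing B]
    (htfA : ∀ x : A, (p : A) * x = 0 → x = 0)
    (htfB : ∀ y : B, (p : B) * y = 0 → y = 0)
    (hcompleteA : IsAdicComplete (Ideal.span {(p : A)}) A)
    (hcompleteB : IsAdicComplete (Ideal.span {(p : B)}) B)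
    [CharP (A ⧸ Ideal.span {(p : A)}) p] [CharP (B ⧸ Ideal.span {(p : B)}) p]
    (hperfA : Function.Bijective (fun x : A ⧸ Ideal.span {(p : A)} => x ^ p))
    (hperfB : Function.Bijective (fun y : B ⧸ Ideal.span {(p : B)} => y ^ p))
    (φA : A →+* A) (φB : B →+* B)
    (hφA : ∀ x : A, φA x - x ^ p ∈ Ideal.span {(p : A)})
    (hφB : ∀ y : B, φB y - y ^ p ∈ Ideal.span {(p : B)})
    (f : A →+* B) :
    f.comp φA = φB.comp f := by
  have hmod : ∀ x, (p : B) ∣ f.comp φA x - φB.comp f x := by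
    intro x
    have h1 : (p : B) ∣ f (φA x - x ^ p) := by
      simpa using map_dvd f (Ideal.mem_span_singleton.mp (hφA x))
    have h2 := Ideal.mem_span_singleton.mp (hφB (f x))
    simpa using dvd_sub h1 h2
  ext x
  have hn := pow_dvd_sub_of_dvd_sub p hperfA.surjective _ _ hmod
  refine sub_eq_zero.mp (hcompleteB.toIsHausdorff.haus _ fun n => ?_)
  rw [SModEq.zero, smul_eq_mul, Ideal.mul_top, Ideal.span_singleton_pow,
    Ideal.mem_span_singleton]
  exact hn n x
end
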